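/- arXiv:2309.10415 — 9 statements merged into one kernel-verified Lean document; each statement's English description precedes it below -/
import Mathlib

section
/- Let H ∈ (0, 1/2) and C₀ > 0. There exists a constant C > 0 depending only on H and C₀ with the following property: for every T ≥ 1 and all measurable symmetric functions ρ₁, ρ₂ : ℝ × ℝ → ℝ (ρᵢ(x,y) = ρᵢ(y,x)) such that for all 0 ≤ s < t ≤ T one has |ρ₂(t,s)| ≤ C₀ · min(1, (t−s)^(2H−2)) and |ρ₁(t,s) − ρ₂(t,s)| ≤ C₀ · min(1, s^(2H−2), (t−s)^(H−1)), it holds that |∫∫_{0<s<t<T} (ρ₁(t,s)² − ρ₂(t,s)²) dt ds| ≤ C · T^H. -/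
open MeasureTheory Real Set Filter

/-- An integral dominated on a measurable set by `g s * h (t - s)` is bounded by the product of the
integrals of `g` and `h`. -/
lemma abs_setIntegral_le_integral_mul_integral {g h : ℝ → ℝ} (hg : Integrable g)
    (hh : Integrable h) (hg0 : ∀ x, 0 ≤ g x) (hh0 : ∀ x, 0 ≤ h x) {S : Set (ℝ × ℝ)}
    (hS : MeasurableSet S) {F : ℝ × ℝ → ℝ}
    (hF : ∀ p ∈ S, |F p| ≤ g p.1 * h (p.2 - p.1)) :
    |∫ p in S, F p| ≤ (∫ x, g x) * ∫ x, h x := by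
  have hmp := measurePreserving_prod_sub (volume : Measure ℝ) (volume : Measure ℝ)
  have hprod := hg.mul_prod hh
  have hint : Integrable (fun p : ℝ × ℝ => g p.1 * h (p.2 - p.1)) :=
    hmp.integrable_comp_of_integrable hprod
  have heq : ∫ p : ℝ × ℝ, g p.1 * h (p.2 - p.1) = (∫ x, g x) * ∫ x, h x := by
    rw [← integral_prod_mul]
    exact hmp.integral_comp (MeasurableEquiv.shearSubRight ℝ).measurableEmbedding
      (fun p : ℝ × ℝ => g p.1 * h p.2)
  calc |∫ p in S, F p| ≤ ∫ p in S, g p.1 * h (p.2 - p.1) :=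
        (norm_eq_abs (∫ p in S, F p)) ▸ norm_integral_le_of_norm_le hint.integrableOn
          ((ae_restrict_iff' hS).2 (Eventually.of_forall hF))
    _ ≤ ∫ p : ℝ × ℝ, g p.1 * h (p.2 - p.1) :=
        setIntegral_le_integral hint (Eventually.of_forall fun p => mul_nonneg (hg0 _) (hh0 _))
    _ = _ := heq

lemma integrableOn_min_one_rpow {a : ℝ} (ha : a < -1) :
    IntegrableOn (fun x : ℝ => min 1 (x ^ a)) (Ioi 0) := by
  have hmeas : Measurable fun x : ℝ => min 1 (x ^ a) := by fun_prop
  rw [← Ioc_union_Ioi_eq_Ioi zero_le_one]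
  refine IntegrableOn.union ?_ ?_
  · refine Integrable.mono' (g := fun _ => 1) (by simp) hmeas.aestronglyMeasurable ?_
    filter_upwards [ae_restrict_mem measurableSet_Ioc] with x hx
    rw [norm_of_nonneg (le_min zero_le_one (rpow_nonneg hx.1.le a))]
    exact min_le_left _ _
  · refine (integrableOn_Ioi_rpow_of_lt ha one_pos).mono' hmeas.aestronglyMeasurable ?_
    filter_upwards [ae_restrict_mem measurableSet_Ioi] with x hx
    rw [norm_of_nonneg (le_min zero_le_one (rpow_nonneg (zero_le_one.trans hx.le) a))]
    exact min_le_right _ _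

lemma abs_sq_sub_sq_le {x y c a b : ℝ} (hy : |y| ≤ c * b)
    (hxya : |x - y| ≤ c * a) (hxyb : |x - y| ≤ c * b) :
    |x ^ 2 - y ^ 2| ≤ 3 * c ^ 2 * (a * b) := by
  have hxy : |x + y| ≤ 3 * (c * b) := by
    have : |x + y| ≤ |x - y| + (|y| + |y|) := by
      calc |x + y| = |(x - y) + (y + y)| := by ring_nf
        _ ≤ _ := (abs_add_le _ _).trans (by gcongr; exact abs_add_le _ _)
    linarith
  calc |x ^ 2 - y ^ 2| = |x - y| * |x + y| := by rw [← abs_mul]; ring_nf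
    _ ≤ (c * a) * (3 * (c * b)) :=
        mul_le_mul hxya hxy (abs_nonneg _) ((abs_nonneg _).trans hxya)
    _ = _ := by ring

/-- Difference of second cumulants: under the covariance bounds, the integral of
`ρ₁² - ρ₂²` over the simplex `{0 < s < t < T}` is bounded by `C ⬝ T^H`. -/
theorem second_cumulant_difference_bound (H C₀ : ℝ) (hH : H ∈ Set.Ioo (0 : ℝ) (1/2))
    (hC₀ : 0 < C₀) :
    ∃ C : ℝ, 0 < C ∧ ∀ T : ℝ, 1 ≤ T → ∀ ρ₁ ρ₂ : ℝ × ℝ → ℝ,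
      Measurable ρ₁ → Measurable ρ₂ →
      (∀ x y : ℝ, ρ₁ (x, y) = ρ₁ (y, x)) →
      (∀ x y : ℝ, ρ₂ (x, y) = ρ₂ (y, x)) →
      (∀ s t : ℝ, 0 ≤ s → s < t → t ≤ T →
        |ρ₂ (t, s)| ≤ C₀ * min 1 ((t - s) ^ (2 * H - 2))) →
      (∀ s t : ℝ, 0 ≤ s → s < t → t ≤ T →
        |ρ₁ (t, s) - ρ₂ (t, s)| ≤
          C₀ * min 1 (min (s ^ (2 * H - 2)) ((t - s) ^ (H - 1)))) →
      |∫ p in {p : ℝ × ℝ | 0 < p.1 ∧ p.1 < p.2 ∧ p.2 < T},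
          (ρ₁ (p.2, p.1) ^ 2 - ρ₂ (p.2, p.1) ^ 2)| ≤ C * T ^ H := by
  obtain ⟨hH0, hH1⟩ := hH
  set g : ℝ → ℝ := (Ioi 0).indicator fun s => min 1 (s ^ (2 * H - 2)) with hg_def
  have hg : Integrable g :=
    (integrable_indicator_iff measurableSet_Ioi).2 (integrableOn_min_one_rpow (by linarith))
  have hg0 : ∀ x, 0 ≤ g x := fun x => indicator_nonneg
    (fun y hy => le_min zero_le_one (rpow_nonneg (le_of_lt hy) _)) x
  have hK : 0 ≤ ∫ x, g x := integral_nonneg hg0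
  refine ⟨3 * C₀ ^ 2 * ((∫ x, g x) + 1) / H, by positivity, ?_⟩
  intro T hT ρ₁ ρ₂ _ _ _ _ hρ₂ hdiff
  have hT0 : 0 ≤ T := zero_le_one.trans hT
  set h : ℝ → ℝ := (Ioc 0 T).indicator fun u => 3 * C₀ ^ 2 * u ^ (H - 1) with hh_def
  have hh : Integrable h := by
    refine (integrable_indicator_iff measurableSet_Ioc).2 (Integrable.const_mul ?_ _)
    exact (intervalIntegrable_iff_integrableOn_Ioc_of_le hT0).1
      (intervalIntegral.intervalIntegrable_rpow' (by linarith))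
  have hh0 : ∀ x, 0 ≤ h x := fun x => indicator_nonneg
    (fun y hy => mul_nonneg (by positivity) (rpow_nonneg hy.1.le _)) x
  have hhint : ∫ x, h x = 3 * C₀ ^ 2 * (T ^ H / H) := by
    rw [hh_def, integral_indicator measurableSet_Ioc, integral_const_mul,
      ← intervalIntegral.integral_of_le hT0, integral_rpow (Or.inl (by linarith))]
    simp [zero_rpow hH0.ne']
  have hS : MeasurableSet {p : ℝ × ℝ | 0 < p.1 ∧ p.1 < p.2 ∧ p.2 < T} :=
    (measurableSet_lt measurable_const measurable_fst).inter
      ((measurableSet_lt measurable_fst measurable_snd).inter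
        (measurableSet_lt measurable_snd measurable_const))
  calc _ ≤ (∫ x, g x) * ∫ x, h x := by
        refine abs_setIntegral_le_integral_mul_integral hg hh hg0 hh0 hS ?_
        rintro ⟨s, t⟩ ⟨hs, hst, htT⟩
        dsimp only at hs hst htT ⊢
        have hu : 0 < t - s := sub_pos.2 hst
        rw [hg_def, hh_def, indicator_of_mem (mem_Ioi.2 hs),
          indicator_of_mem (mem_Ioc.2 ⟨hu, by linarith⟩)]
        have hd := hdiff s t hs.le hst htT.le
        have hmin : min 1 ((t - s) ^ (2 * H - 2)) ≤ (t - s) ^ (H - 1) := by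
          rcases le_total (t - s) 1 with h1 | h1
          · exact (min_le_left _ _).trans
              (one_le_rpow_of_pos_of_le_one_of_nonpos hu h1 (by linarith))
          · exact (min_le_right _ _).trans (rpow_le_rpow_of_exponent_le h1 (by linarith))
        refine (abs_sq_sub_sq_le (c := C₀) (a := min 1 (s ^ (2 * H - 2)))
          (b := (t - s) ^ (H - 1)) ((hρ₂ s t hs.le hst htT.le).trans (by gcongr)) (hd.trans ?_) (hd.trans ?_)).trans_eq
          (by ring)
        · rw [← min_assoc]
          exact mul_le_mul_of_nonneg_left (min_le_left _ _) hC₀.le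
        · gcongr
          exact (min_le_right _ _).trans (min_le_right _ _)
    _ ≤ ((∫ x, g x) + 1) * ∫ x, h x := by
        gcongr
        · exact integral_nonneg hh0
        · linarith
    _ = _ := by rw [hhint]; ring
end

section
/- Let H ∈ (0, 1/2) and C₀ > 0. There exists a constant C > 0 depending only on H and C₀ with the following property: for every T ≥ 1 and all measurable symmetric functions ρ₁, ρ₂ : ℝ × ℝ → ℝ (ρᵢ(x,y) = ρᵢ(y,x)) such that for all 0 ≤ s < t ≤ T one has |ρ₂(t,s)| ≤ C₀ · min(1, (t−s)^(2H−2)) and |ρ₁(t,s) − ρ₂(t,s)| ≤ C₀ · min(1, s^(2H−2), (t−s)^(H−1)), it holds that |∫∫∫_{0<r<s<t<T} (ρ₁(r,s)ρ₁(s,t)ρ₁(t,r) − ρ₂(r,s)ρ₂(s,t)ρ₂(t,r)) dr ds dt| ≤ C · T^H. -/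
open MeasureTheory Real Set Filter

/-- The kernel `min 1 (u ^ (2H - 2))` on the positive half-line, extended by zero. -/
noncomputable def shortKernel (H : ℝ) : ℝ → ENNReal :=
  (Ioi (0 : ℝ)).indicator fun u => ENNReal.ofReal (min 1 (u ^ (2 * H - 2)))

/-- The kernel `u ^ (H - 1)` on `(0, T]`, extended by zero. -/
noncomputable def longKernel (H T : ℝ) : ℝ → ENNReal :=
  (Ioc (0 : ℝ) T).indicator fun u => ENNReal.ofReal (u ^ (H - 1))

theorem measurable_shortKernel (H : ℝ) : Measurable (shortKernel H) := by
  unfold shortKernel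
  exact Measurable.indicator (by fun_prop) measurableSet_Ioi

theorem measurable_longKernel (H T : ℝ) : Measurable (longKernel H T) := by
  unfold longKernel
  exact Measurable.indicator (by fun_prop) measurableSet_Ioc

theorem lintegral_shortKernel_ne_top {H : ℝ} (hH : H < 1 / 2) :
    ∫⁻ u, shortKernel H u ≠ ⊤ := by
  unfold shortKernel
  rw [lintegral_indicator measurableSet_Ioi,
    ← Ioc_union_Ioi_eq_Ioi (zero_le_one : (0 : ℝ) ≤ 1)]
  refine ((lintegral_union_le _ _ _).trans_lt (ENNReal.add_lt_top.2 ⟨?_, ?_⟩)).ne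
  · calc _ ≤ ∫⁻ _ in Ioc (0 : ℝ) 1, 1 :=
          lintegral_mono fun u => ENNReal.ofReal_le_one.2 (min_le_left _ _)
      _ < ⊤ := by simp
  · calc _ ≤ ∫⁻ u in Ioi (1 : ℝ), ENNReal.ofReal (u ^ (2 * H - 2)) :=
          lintegral_mono fun u => ENNReal.ofReal_le_ofReal (min_le_right _ _)
      _ < ⊤ := (integrableOn_Ioi_rpow_of_lt (by linarith) zero_lt_one).lintegral_lt_top

theorem lintegral_longKernel {H T : ℝ} (hH : 0 < H) (hT : 0 ≤ T) :
    ∫⁻ u, longKernel H T u = ENNReal.ofReal (T ^ H / H) := by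
  unfold longKernel
  have hint : IntervalIntegrable (fun u : ℝ => u ^ (H - 1)) volume 0 T :=
    intervalIntegral.intervalIntegrable_rpow' (by linarith)
  rw [lintegral_indicator measurableSet_Ioc, ← ofReal_integral_eq_lintegral_ofReal
    ((intervalIntegrable_iff_integrableOn_Ioc_of_le hT).1 hint),
    ← intervalIntegral.integral_of_le hT, integral_rpow (Or.inl (by linarith))]
  · simp [zero_rpow hH.ne']
  · filter_upwards [ae_restrict_mem measurableSet_Ioc] with u hu
    exact rpow_nonneg hu.1.le _

/-- Integrating out the increments of three variables one at a time. -/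
theorem lintegral_mul_sheared {f g h : ℝ → ENNReal} {φ : ℝ → ℝ} {ψ : ℝ × ℝ → ℝ}
    (hf : Measurable f) (hg : Measurable g) (hh : Measurable h)
    (hφ : Measurable φ) (hψ : Measurable ψ) :
    ∫⁻ p : ℝ × ℝ × ℝ, f p.1 * g (p.2.1 - φ p.1) * h (p.2.2 - ψ (p.1, p.2.1)) =
      (∫⁻ u, f u) * (∫⁻ u, g u) * ∫⁻ u, h u := by
  rw [Measure.volume_eq_prod, lintegral_prod _ (by fun_prop)]
  have inner (r : ℝ) : ∫⁻ q : ℝ × ℝ, f r * g (q.1 - φ r) * h (q.2 - ψ (r, q.1)) =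
      f r * ((∫⁻ u, g u) * ∫⁻ u, h u) := by
    rw [Measure.volume_eq_prod, lintegral_prod _ (by fun_prop)]
    simp only
    have hshift (s : ℝ) : ∫⁻ t, f r * g (s - φ r) * h (t - ψ (r, s)) =
        f r * (g (s - φ r) * ∫⁻ u, h u) := by
      rw [lintegral_const_mul _ (by fun_prop), lintegral_sub_right_eq_self h, mul_assoc]
    simp_rw [hshift]
    rw [lintegral_const_mul _ (by fun_prop), lintegral_mul_const _ (by fun_prop),
      lintegral_sub_right_eq_self g]
  simp only [inner]
  rw [lintegral_mul_const _ hf, mul_assoc]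

theorem min_one_rpow_le_rpow {H u : ℝ} (hu : 0 < u) :
    min 1 (u ^ (2 * H - 2)) ≤ u ^ (H - 1) := by
  have hsq : u ^ (2 * H - 2) = u ^ (H - 1) * u ^ (H - 1) := by
    rw [← rpow_add hu]; ring_nf
  have hpos := rpow_pos_of_pos hu (H - 1)
  rw [hsq, min_le_iff]
  rcases le_total 1 (u ^ (H - 1)) with h | h
  · exact Or.inl h
  · exact Or.inr (by nlinarith)

/-- Telescoping bound for the difference of two triple products, where `x`, `y`, `z` are the
factors of the second product, `a`, `b`, `c` those of the first, and each difference is small. -/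
theorem abs_mul_sub_mul_le {a b c x y z K mr ms mx my nx ny : ℝ} (hK : 0 ≤ K)
    (hmr : 0 ≤ mr) (hms : 0 ≤ ms) (hmx : 0 ≤ mx) (hmy : 0 ≤ my) (hnx : 0 ≤ nx) (hny : 0 ≤ ny)
    (hmn : my ≤ ny) (hsr : ms ≤ mr)
    (hx : |x| ≤ K * mx) (hy : |y| ≤ K * my)
    (hzx : |z| ≤ K * nx) (hzy : |z| ≤ K * ny)
    (hax : |a - x| ≤ K * mr) (hby : |b - y| ≤ K * ms)
    (hcz : |c - z| ≤ K * mr) (hczx : |c - z| ≤ K * nx) (hczy : |c - z| ≤ K * ny) :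
    |a * b * c - x * y * z| ≤
      3 * K ^ 3 * (mr * mx * ny + mr * my * nx + mr * ms * ny) := by
  have hcx : |c| ≤ 2 * (K * nx) := by
    have := abs_add_le (c - z) z; rw [sub_add_cancel] at this; linarith
  have hcy : |c| ≤ 2 * (K * ny) := by
    have := abs_add_le (c - z) z; rw [sub_add_cancel] at this; linarith
  have e1 : |(a - x) * y * c| ≤ K * mr * (K * my) * (2 * (K * nx)) := by
    rw [abs_mul, abs_mul]; gcongr
  have e2 : |(a - x) * (b - y) * c| ≤ K * mr * (K * ms) * (2 * (K * ny)) := by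
    rw [abs_mul, abs_mul]; gcongr
  have e3 : |x * (b - y) * c| ≤ K * mx * (K * mr) * (2 * (K * ny)) := by
    rw [abs_mul, abs_mul]
    have : |b - y| ≤ K * mr := hby.trans (by gcongr)
    gcongr
  have e4 : |x * y * (c - z)| ≤ K * mx * (K * ny) * (K * mr) := by
    rw [abs_mul, abs_mul]
    have : |y| ≤ K * ny := hy.trans (by gcongr)
    gcongr
  have split : a * b * c - x * y * z = (a - x) * y * c + (a - x) * (b - y) * c
      + x * (b - y) * c + x * y * (c - z) := by ring
  rw [split]
  have t1 := abs_add_le ((a - x) * y * c) ((a - x) * (b - y) * c)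
  have t2 := abs_add_le ((a - x) * y * c + (a - x) * (b - y) * c) (x * (b - y) * c)
  have t3 := abs_add_le ((a - x) * y * c + (a - x) * (b - y) * c + x * (b - y) * c)
    (x * y * (c - z))
  have p1 : 0 ≤ K ^ 3 * (mr * my * nx) := by positivity
  have p2 : 0 ≤ K ^ 3 * (mr * ms * ny) := by positivity
  nlinarith

/-- Difference of third cumulants: under the covariance bounds, the integral of
`ρ₁(r,s)ρ₁(s,t)ρ₁(t,r) - ρ₂(r,s)ρ₂(s,t)ρ₂(t,r)` over the simplex
`{0 < r < s < t < T}` is bounded by `C ⬝ T^H`. -/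
theorem third_cumulant_difference_bound (H C₀ : ℝ) (hH : H ∈ Set.Ioo (0 : ℝ) (1/2))
    (hC₀ : 0 < C₀) :
    ∃ C : ℝ, 0 < C ∧ ∀ T : ℝ, 1 ≤ T → ∀ ρ₁ ρ₂ : ℝ × ℝ → ℝ,
      Measurable ρ₁ → Measurable ρ₂ →
      (∀ x y : ℝ, ρ₁ (x, y) = ρ₁ (y, x)) →
      (∀ x y : ℝ, ρ₂ (x, y) = ρ₂ (y, x)) →
      (∀ s t : ℝ, 0 ≤ s → s < t → t ≤ T →
        |ρ₂ (t, s)| ≤ C₀ * min 1 ((t - s) ^ (2 * H - 2))) →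
      (∀ s t : ℝ, 0 ≤ s → s < t → t ≤ T →
        |ρ₁ (t, s) - ρ₂ (t, s)| ≤
          C₀ * min 1 (min (s ^ (2 * H - 2)) ((t - s) ^ (H - 1)))) →
      |∫ p in {p : ℝ × ℝ × ℝ | 0 < p.1 ∧ p.1 < p.2.1 ∧ p.2.1 < p.2.2 ∧ p.2.2 < T},
          (ρ₁ (p.1, p.2.1) * ρ₁ (p.2.1, p.2.2) * ρ₁ (p.2.2, p.1)
            - ρ₂ (p.1, p.2.1) * ρ₂ (p.2.1, p.2.2) * ρ₂ (p.2.2, p.1))| ≤ C * T ^ H := by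
  obtain ⟨hH0, hH2⟩ := hH
  set M := ∫⁻ u, shortKernel H u with hM
  have hMtop : M ≠ ⊤ := lintegral_shortKernel_ne_top hH2
  refine ⟨9 * C₀ ^ 3 * M.toReal ^ 2 / H + 1, by positivity, ?_⟩
  intro T hT ρ₁ ρ₂ _ _ hs₁ hs₂ h₂ hd
  set S := {p : ℝ × ℝ × ℝ | 0 < p.1 ∧ p.1 < p.2.1 ∧ p.2.1 < p.2.2 ∧ p.2.2 < T} with hS
  set F : ℝ × ℝ × ℝ → ℝ := fun p => ρ₁ (p.1, p.2.1) * ρ₁ (p.2.1, p.2.2) * ρ₁ (p.2.2, p.1)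
            - ρ₂ (p.1, p.2.1) * ρ₂ (p.2.1, p.2.2) * ρ₂ (p.2.2, p.1) with hF
  set m := shortKernel H with hm
  set n := longKernel H T with hn
  have hmm : Measurable m := measurable_shortKernel H
  have hnm : Measurable n := measurable_longKernel H T
  set G : ℝ × ℝ × ℝ → ENNReal := fun p =>
    m p.1 * m (p.2.1 - p.1) * n (p.2.2 - p.2.1) +
      m p.1 * n (p.2.1 - p.1) * m (p.2.2 - p.2.1) +
      m p.1 * m (p.2.1 - 0) * n (p.2.2 - p.2.1) with hG
  have hSm : MeasurableSet S := by
    have hr : MeasurableSet {p : ℝ × ℝ × ℝ | 0 < p.1} :=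
      measurableSet_lt (by fun_prop) (by fun_prop)
    have hrs : MeasurableSet {p : ℝ × ℝ × ℝ | p.1 < p.2.1} :=
      measurableSet_lt (by fun_prop) (by fun_prop)
    have hst : MeasurableSet {p : ℝ × ℝ × ℝ | p.2.1 < p.2.2} :=
      measurableSet_lt (by fun_prop) (by fun_prop)
    have ht : MeasurableSet {p : ℝ × ℝ × ℝ | p.2.2 < T} :=
      measurableSet_lt (by fun_prop) (by fun_prop)
    exact hr.inter (hrs.inter (hst.inter ht))
  have hpt : ∀ p ∈ S, ‖F p‖ₑ ≤ ENNReal.ofReal (3 * C₀ ^ 3) * G p := by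
    rintro ⟨r, s, t⟩ ⟨hr, hrs, hst, htT⟩
    simp only at hr hrs hst htT
    have hs : 0 < s := hr.trans hrs
    have hx : 0 < s - r := sub_pos.2 hrs
    have hy : 0 < t - s := sub_pos.2 hst
    have anti {u v : ℝ} (hu : 0 < u) (huv : u ≤ v) : v ^ (H - 1) ≤ u ^ (H - 1) :=
      rpow_le_rpow_of_nonpos hu huv (by linarith)
    have hzx : (t - r) ^ (H - 1) ≤ (s - r) ^ (H - 1) := anti hx (by linarith)
    have hzy : (t - r) ^ (H - 1) ≤ (t - s) ^ (H - 1) := anti hy (by linarith)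
    have hz := min_one_rpow_le_rpow (H := H) (hx.trans (by linarith : s - r < t - r))
    have dshort {u v : ℝ} (hu : 0 < u) (huv : u < v) (hv : v ≤ T) :
        |ρ₁ (v, u) - ρ₂ (v, u)| ≤ C₀ * min 1 (u ^ (2 * H - 2)) :=
      (hd u v hu.le huv hv).trans
        (mul_le_mul_of_nonneg_left (min_le_min_left _ (min_le_left _ _)) hC₀.le)
    have dlong : |ρ₁ (t, r) - ρ₂ (t, r)| ≤ C₀ * (t - r) ^ (H - 1) :=
      (hd r t hr.le (hrs.trans hst) htT.le).trans
        (mul_le_mul_of_nonneg_left ((min_le_right _ _).trans (min_le_right _ _)) hC₀.le)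
    have along : |ρ₂ (t, r)| ≤ C₀ * (t - r) ^ (H - 1) :=
      (h₂ r t hr.le (hrs.trans hst) htT.le).trans (mul_le_mul_of_nonneg_left hz hC₀.le)
    have nonneg {u : ℝ} (hu : 0 < u) : 0 ≤ min 1 (u ^ (2 * H - 2)) :=
      le_min zero_le_one (rpow_nonneg hu.le _)
    have key : |F (r, s, t)| ≤ 3 * C₀ ^ 3 *
        (min 1 (r ^ (2 * H - 2)) * min 1 ((s - r) ^ (2 * H - 2)) * (t - s) ^ (H - 1) +
        min 1 (r ^ (2 * H - 2)) * min 1 ((t - s) ^ (2 * H - 2)) * (s - r) ^ (H - 1) +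
        min 1 (r ^ (2 * H - 2)) * min 1 (s ^ (2 * H - 2)) * (t - s) ^ (H - 1)) := by
      simp only [hF]
      rw [hs₁ r s, hs₁ s t, hs₂ r s, hs₂ s t]
      exact abs_mul_sub_mul_le hC₀.le (nonneg hr) (nonneg hs) (nonneg hx) (nonneg hy)
        (rpow_nonneg hx.le _) (rpow_nonneg hy.le _) (min_one_rpow_le_rpow hy)
        (min_le_min_left _ (rpow_le_rpow_of_nonpos hr hrs.le (by linarith)))
        (h₂ r s hr.le hrs (hst.trans htT).le) (h₂ s t hs.le hst htT.le)
        (along.trans (by gcongr)) (along.trans (by gcongr))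
        (dshort hr hrs (hst.trans htT).le) (dshort hs hst htT.le)
        (dshort hr (hrs.trans hst) htT.le)
        (dlong.trans (by gcongr)) (dlong.trans (by gcongr))
    have evm {u : ℝ} (hu : 0 < u) : m u = ENNReal.ofReal (min 1 (u ^ (2 * H - 2))) :=
      indicator_of_mem (mem_Ioi.2 hu) _
    have evn {u : ℝ} (hu : 0 < u) (huT : u ≤ T) : n u = ENNReal.ofReal (u ^ (H - 1)) :=
      indicator_of_mem (mem_Ioc.2 ⟨hu, huT⟩) _
    have nr := nonneg hr
    have ns := nonneg hs
    have nx := nonneg hx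
    have ny := nonneg hy
    have px := rpow_nonneg hx.le (H - 1)
    have py := rpow_nonneg hy.le (H - 1)
    rw [Real.enorm_eq_ofReal_abs]
    refine (ENNReal.ofReal_le_ofReal key).trans_eq ?_
    simp only [hG, sub_zero]
    rw [evm hr, evm hx, evm hy, evm hs, evn hx (by linarith), evn hy (by linarith),
      ENNReal.ofReal_mul (by positivity), ENNReal.ofReal_add (by positivity) (by positivity),
      ENNReal.ofReal_add (by positivity) (by positivity)]
    simp only [ENNReal.ofReal_mul, nr, mul_nonneg, ns, nx, ny]
    ring
  have hGint : ∫⁻ p, G p = ENNReal.ofReal (3 * M.toReal ^ 2 * (T ^ H / H)) := by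
    simp only [hG]
    rw [lintegral_add_left (by fun_prop), lintegral_add_left (by fun_prop),
      lintegral_mul_sheared (φ := fun r => r) (ψ := fun q => q.2) hmm hmm hnm
        (by fun_prop) (by fun_prop),
      lintegral_mul_sheared (φ := fun r => r) (ψ := fun q => q.2) hmm hnm hmm
        (by fun_prop) (by fun_prop),
      lintegral_mul_sheared (φ := fun _ => 0) (ψ := fun q => q.2) hmm hmm hnm
        (by fun_prop) (by fun_prop),
      lintegral_longKernel hH0 (by linarith), ← hM, ENNReal.ofReal_mul (by positivity),
      ENNReal.ofReal_mul (by positivity), ENNReal.ofReal_pow (by positivity),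
      ENNReal.ofReal_toReal hMtop]
    rw [show ENNReal.ofReal 3 = 3 by simp]
    ring
  have hle : ∫⁻ p in S, ‖F p‖ₑ ≤ ENNReal.ofReal (9 * C₀ ^ 3 * M.toReal ^ 2 / H * T ^ H) :=
    calc ∫⁻ p in S, ‖F p‖ₑ ≤ ∫⁻ p in S, ENNReal.ofReal (3 * C₀ ^ 3) * G p :=
          setLIntegral_mono' hSm hpt
      _ ≤ ∫⁻ p, ENNReal.ofReal (3 * C₀ ^ 3) * G p := setLIntegral_le_lintegral _ _
      _ = ENNReal.ofReal (9 * C₀ ^ 3 * M.toReal ^ 2 / H * T ^ H) := by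
          rw [lintegral_const_mul _ (by fun_prop), hGint, ← ENNReal.ofReal_mul (by positivity)]
          congr 1
          ring
  have hTH : 0 ≤ T ^ H := rpow_nonneg (by linarith) _
  calc |∫ p in S, F p| ≤ 9 * C₀ ^ 3 * M.toReal ^ 2 / H * T ^ H := by
        rw [← ENNReal.ofReal_le_ofReal_iff (by positivity), ← Real.enorm_eq_ofReal_abs]
        exact (enorm_integral_le_lintegral_enorm _).trans hle
    _ ≤ _ := by gcongr; linarith
end

section
/- Let H ∈ (0, 1/2) and C₀ > 0. There exists a constant C > 0 depending only on H and C₀ with the following property: for every T ≥ 1 and all measurable symmetric functions ρ₁, ρ₂ : ℝ × ℝ → ℝ (ρᵢ(x,y) = ρᵢ(y,x)) such that for all 0 ≤ s < t ≤ T one has |ρ₂(t,s)| ≤ C₀ · min(1, (t−s)^(2H−2)) and |ρ₁(t,s) − ρ₂(t,s)| ≤ C₀ · min(1, s^(2H−2), (t−s)^(H−1)), it holds that |∫∫∫∫_{0<s<t<u<v<T} (ρ₁(s,t)ρ₁(t,u)ρ₁(u,v)ρ₁(v,s) − ρ₂(s,t)ρ₂(t,u)ρ₂(u,v)ρ₂(v,s))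 ds dt du dv| ≤ C · T^H. -/
open MeasureTheory Real Set Filter

/-- The truncated power `min 1 (x ^ a)`. -/
noncomputable def truncPow (a x : ℝ) : ℝ := min 1 (x ^ a)

/-- The truncated power on `(0, T)`, extended by zero, with values in `ℝ≥0∞`. -/
noncomputable def truncKernel (a T : ℝ) : ℝ → ENNReal :=
  (Ioo 0 T).indicator fun x => ENNReal.ofReal (truncPow a x)

lemma truncPow_nonneg {a x : ℝ} (hx : 0 ≤ x) : 0 ≤ truncPow a x :=
  le_min zero_le_one (rpow_nonneg hx a)

lemma truncPow_le_of_le {a x y : ℝ} (ha : a ≤ 0) (hx : 0 < x) (hxy : x ≤ y) :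
    truncPow a y ≤ truncPow a x :=
  min_le_min_left 1 (rpow_le_rpow_of_nonpos hx hxy ha)

lemma truncPow_le_of_exponent_le {a b x : ℝ} (hab : a ≤ b) (hb : b ≤ 0) (hx : 0 < x) :
    truncPow a x ≤ truncPow b x := by
  refine le_min (min_le_left _ _) ?_
  rcases le_total x 1 with h | h
  · exact (min_le_left _ _).trans (one_le_rpow_of_pos_of_le_one_of_nonpos hx h hb)
  · exact (min_le_right _ _).trans (rpow_le_rpow_of_exponent_le h hab)

lemma measurable_truncKernel (a T : ℝ) : Measurable (truncKernel a T) := by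
  unfold truncKernel truncPow
  exact Measurable.indicator (by fun_prop) measurableSet_Ioo

lemma truncKernel_of_mem {a T x : ℝ} (h0 : 0 < x) (hT : x < T) :
    truncKernel a T x = ENNReal.ofReal (truncPow a x) :=
  indicator_of_mem (show x ∈ Ioo 0 T from ⟨h0, hT⟩) _

lemma lintegral_truncKernel_le_of_lt_neg_one {a T : ℝ} (ha : a < -1) :
    ∫⁻ x, truncKernel a T x ≤ ENNReal.ofReal (1 + -1 / (a + 1)) := by
  have hpow : ∫⁻ x in Ioi (1 : ℝ), ENNReal.ofReal (x ^ a) = ENNReal.ofReal (-1 / (a + 1)) := by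
    rw [← ofReal_integral_eq_lintegral_ofReal (integrableOn_Ioi_rpow_of_lt ha zero_lt_one),
      integral_Ioi_rpow_of_lt ha zero_lt_one, one_rpow]
    filter_upwards [ae_restrict_mem measurableSet_Ioi] with x hx
    exact rpow_nonneg (zero_le_one.trans (le_of_lt hx)) a
  have hle : ∀ x, truncKernel a T x ≤ (Ioc (0 : ℝ) 1).indicator 1 x +
      (Ioi (1 : ℝ)).indicator (fun x => ENNReal.ofReal (x ^ a)) x := by
    intro x
    by_cases hx : x ∈ Ioo 0 T
    · rw [truncKernel_of_mem hx.1 hx.2]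
      rcases le_or_gt x 1 with h | h
      · refine le_add_right ?_
        rw [indicator_of_mem (show x ∈ Ioc (0 : ℝ) 1 from ⟨hx.1, h⟩)]
        exact ENNReal.ofReal_le_one.2 (min_le_left _ _)
      · refine le_add_left ?_
        rw [indicator_of_mem (show x ∈ Ioi (1 : ℝ) from h)]
        exact ENNReal.ofReal_le_ofReal (min_le_right _ _)
    · rw [truncKernel, indicator_of_notMem hx]
      exact zero_le
  calc ∫⁻ x, truncKernel a T x
      ≤ ∫⁻ x, ((Ioc (0 : ℝ) 1).indicator 1 x +
          (Ioi (1 : ℝ)).indicator (fun x => ENNReal.ofReal (x ^ a)) x) := lintegral_mono hle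
    _ = ENNReal.ofReal (1 + -1 / (a + 1)) := by
      rw [lintegral_add_left (measurable_one.indicator measurableSet_Ioc),
        lintegral_indicator_one measurableSet_Ioc, lintegral_indicator measurableSet_Ioi, hpow,
        Real.volume_Ioc, sub_zero, ENNReal.ofReal_add zero_le_one]
      exact (div_pos_of_neg_of_neg (by norm_num) (by linarith)).le

lemma lintegral_truncKernel_le_rpow {a T : ℝ} (ha : -1 < a) (hT : 0 ≤ T) :
    ∫⁻ x, truncKernel a T x ≤ ENNReal.ofReal (T ^ (a + 1) / (a + 1)) := by
  have hint : IntegrableOn (fun x : ℝ => x ^ a) (Ioc 0 T) :=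
    (intervalIntegrable_iff_integrableOn_Ioc_of_le hT).1
      (intervalIntegral.intervalIntegrable_rpow' ha)
  calc ∫⁻ x, truncKernel a T x
      = ∫⁻ x in Ioo 0 T, ENNReal.ofReal (truncPow a x) := lintegral_indicator measurableSet_Ioo _
    _ ≤ ∫⁻ x in Ioc 0 T, ENNReal.ofReal (x ^ a) :=
      lintegral_mono' (Measure.restrict_mono Ioo_subset_Ioc_self le_rfl)
        fun x => ENNReal.ofReal_le_ofReal (min_le_right _ _)
    _ = ENNReal.ofReal (T ^ (a + 1) / (a + 1)) := by
      rw [← ofReal_integral_eq_lintegral_ofReal hint, ← intervalIntegral.integral_of_le hT,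
        integral_rpow (Or.inl ha), zero_rpow (by linarith), sub_zero]
      filter_upwards [ae_restrict_mem measurableSet_Ioc] with x hx
      exact rpow_nonneg hx.1.le a

lemma lintegral_prod_mul_of_fiber_const {α : Type*} [MeasureSpace α]
    [SFinite (volume : Measure α)] {f : ℝ → ENNReal} {F : ℝ × α → ENNReal} {c : ENNReal}
    (hf : Measurable f) (hF : Measurable F) (hc : ∀ x, ∫⁻ y, F (x, y) = c) (a : ℝ) :
    ∫⁻ q : ℝ × α, f (q.1 - a) * F q = (∫⁻ x, f x) * c := by
  rw [Measure.volume_eq_prod, lintegral_prod _ (by fun_prop)]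
  calc ∫⁻ x, ∫⁻ y, f (x - a) * F (x, y)
      = ∫⁻ x, f (x - a) * c := by
        refine lintegral_congr fun x => ?_
        rw [lintegral_const_mul _ (by fun_prop), hc]
    _ = (∫⁻ x, f x) * c := by
        rw [lintegral_mul_const _ (by fun_prop), lintegral_sub_right_eq_self]

/-- A product of functions of the successive increments integrates to the product of the
integrals. -/
lemma lintegral_prod_increments {f₁ f₂ f₃ f₄ : ℝ → ENNReal} (h₁ : Measurable f₁)
    (h₂ : Measurable f₂) (h₃ : Measurable f₃) (h₄ : Measurable f₄) :
    ∫⁻ p : ℝ × ℝ × ℝ × ℝ, f₁ p.1 * (f₂ (p.2.1 - p.1) *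
        (f₃ (p.2.2.1 - p.2.1) * f₄ (p.2.2.2 - p.2.2.1))) =
      (∫⁻ x, f₁ x) * ((∫⁻ x, f₂ x) * ((∫⁻ x, f₃ x) * ∫⁻ x, f₄ x)) := by
  have tail₃ := lintegral_prod_mul_of_fiber_const (F := fun q : ℝ × ℝ => f₄ (q.2 - q.1)) h₃
    (by fun_prop) fun x => lintegral_sub_right_eq_self f₄ x
  have tail₂ := lintegral_prod_mul_of_fiber_const
    (F := fun q : ℝ × ℝ × ℝ => f₃ (q.2.1 - q.1) * f₄ (q.2.2 - q.2.1)) h₂ (by fun_prop) tail₃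
  simpa only [sub_zero] using lintegral_prod_mul_of_fiber_const
    (F := fun q : ℝ × ℝ × ℝ × ℝ =>
      f₂ (q.2.1 - q.1) * (f₃ (q.2.2.1 - q.2.1) * f₄ (q.2.2.2 - q.2.2.1)))
    h₁ (by fun_prop) tail₂ 0

lemma abs_mul_four_le {a b c d A B C D : ℝ} (ha : |a| ≤ A) (hb : |b| ≤ B) (hc : |c| ≤ C)
    (hd : |d| ≤ D) : |a * b * c * d| ≤ A * B * C * D := by
  have hA := (abs_nonneg a).trans ha
  have hB := (abs_nonneg b).trans hb
  have hC := (abs_nonneg c).trans hc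
  rw [abs_mul, abs_mul, abs_mul]
  gcongr

/-- Expansion of a product of four perturbed factors `rᵢ + dᵢ`, each term being bounded by one
of three products of the bounds. -/
lemma abs_prod_add_sub_prod_le {K bw bx bz b_y gx gy gz r₁ r₂ r₃ r₄ d₁ d₂ d₃ d₄ : ℝ}
    (hr₁ : |r₁| ≤ K * bx) (hr₂ : |r₂| ≤ K * b_y) (hr₃ : |r₃| ≤ K * bz) (hd₁ : |d₁| ≤ K * bw)
    (hd₂w : |d₂| ≤ K * bw) (hd₂x : |d₂| ≤ K * bx)
    (hd₃w : |d₃| ≤ K * bw) (hd₃x : |d₃| ≤ K * bx) (hd₃y : |d₃| ≤ K * b_y)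
    (hd₄ : |d₄| ≤ K * bw) (hr₃g : |r₃| ≤ K * gz)
    (hx : |r₄ + d₄| ≤ 2 * K * gx) (hy : |r₄ + d₄| ≤ 2 * K * gy) (hz : |r₄ + d₄| ≤ 2 * K * gz) :
    |(r₁ + d₁) * (r₂ + d₂) * (r₃ + d₃) * (r₄ + d₄) - r₁ * r₂ * r₃ * r₄| ≤
      9 * K ^ 4 * (bw * bx * b_y * gz + bw * bx * gy * bz + bw * gx * b_y * bz) := by
  have t₁ := abs_mul_four_le hr₁ hr₂ hr₃g hd₄
  have t₂ := abs_mul_four_le hd₁ hd₂x hd₃y hz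
  have t₃ := abs_mul_four_le hd₁ hd₂x hr₃ hy
  have t₄ := abs_mul_four_le hd₁ hr₂ hd₃x hz
  have t₅ := abs_mul_four_le hd₁ hr₂ hr₃ hx
  have t₆ := abs_mul_four_le hr₁ hd₂w hd₃y hz
  have t₇ := abs_mul_four_le hr₁ hd₂w hr₃ hy
  have t₈ := abs_mul_four_le hr₁ hr₂ hd₃w hz
  have n₃ := (abs_nonneg _).trans t₃
  have n₅ := (abs_nonneg _).trans t₅
  rw [abs_le] at *
  constructor <;> linarith

/-- The four-fold kernel product, bounded on the simplex by three products of truncated powers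
of the increments. -/
lemma abs_cycle_prod_sub_le {H C₀ T : ℝ} (hH : H < 1 / 2) (hC₀ : 0 < C₀) {ρ₁ ρ₂ : ℝ × ℝ → ℝ}
    (sym₁ : ∀ x y : ℝ, ρ₁ (x, y) = ρ₁ (y, x)) (sym₂ : ∀ x y : ℝ, ρ₂ (x, y) = ρ₂ (y, x))
    (hρ : ∀ s t : ℝ, 0 ≤ s → s < t → t ≤ T →
      |ρ₂ (t, s)| ≤ C₀ * min 1 ((t - s) ^ (2 * H - 2)))
    (hδ : ∀ s t : ℝ, 0 ≤ s → s < t → t ≤ T → |ρ₁ (t, s) - ρ₂ (t, s)| ≤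
      C₀ * min 1 (min (s ^ (2 * H - 2)) ((t - s) ^ (H - 1))))
    {s t u v : ℝ} (hs : 0 < s) (hst : s < t) (htu : t < u) (huv : u < v) (hvT : v < T) :
    |ρ₁ (s, t) * ρ₁ (t, u) * ρ₁ (u, v) * ρ₁ (v, s) -
        ρ₂ (s, t) * ρ₂ (t, u) * ρ₂ (u, v) * ρ₂ (v, s)| ≤
      9 * C₀ ^ 4 *
        (truncPow (2 * H - 2) s * truncPow (2 * H - 2) (t - s) * truncPow (2 * H - 2) (u - t) *
            truncPow (H - 1) (v - u) +
          truncPow (2 * H - 2) s * truncPow (2 * H - 2) (t - s) * truncPow (H - 1) (u - t) *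
            truncPow (2 * H - 2) (v - u) +
          truncPow (2 * H - 2) s * truncPow (H - 1) (t - s) * truncPow (2 * H - 2) (u - t) *
            truncPow (2 * H - 2) (v - u)) := by
  have hb : ∀ {x y : ℝ}, 0 < x → x ≤ y →
      C₀ * truncPow (2 * H - 2) y ≤ C₀ * truncPow (2 * H - 2) x := fun hx hxy =>
    mul_le_mul_of_nonneg_left (truncPow_le_of_le (by linarith) hx hxy) hC₀.le
  have hbg : ∀ {x : ℝ}, 0 < x → C₀ * truncPow (2 * H - 2) x ≤ C₀ * truncPow (H - 1) x := fun hx =>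
    mul_le_mul_of_nonneg_left
      (truncPow_le_of_exponent_le (by linarith) (by linarith) hx) hC₀.le
  have hr : ∀ {x y : ℝ}, 0 < x → x < y → y < T →
      |ρ₂ (y, x)| ≤ C₀ * truncPow (2 * H - 2) (y - x) := fun hx hxy hy =>
    hρ _ _ hx.le hxy hy.le
  have hd : ∀ {x y : ℝ}, 0 < x → x < y → y < T →
      |ρ₁ (y, x) - ρ₂ (y, x)| ≤ C₀ * truncPow (2 * H - 2) x := fun hx hxy hy =>
    (hδ _ _ hx.le hxy hy.le).trans
      (mul_le_mul_of_nonneg_left (min_le_min_left 1 (min_le_left _ _)) hC₀.le)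
  have hdg : |ρ₁ (v, s) - ρ₂ (v, s)| ≤ C₀ * truncPow (H - 1) (v - s) :=
    (hδ _ _ hs.le (by linarith) hvT.le).trans
      (mul_le_mul_of_nonneg_left (min_le_min_left 1 (min_le_right _ _)) hC₀.le)
  have hclose : ∀ {x : ℝ}, 0 < x → x ≤ v - s →
      |ρ₂ (v, s) + (ρ₁ (v, s) - ρ₂ (v, s))| ≤ 2 * C₀ * truncPow (H - 1) x := by
    intro x hx hxv
    have hmono := mul_le_mul_of_nonneg_left
      (truncPow_le_of_le (a := H - 1) (by linarith) hx hxv) hC₀.le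
    have hrv := (hr hs (show s < v by linarith) hvT).trans (hbg (by linarith))
    linarith [abs_add_le (ρ₂ (v, s)) (ρ₁ (v, s) - ρ₂ (v, s))]
  have ht : 0 < t := hs.trans hst
  have hu : 0 < u := ht.trans htu
  have huT : u < T := huv.trans hvT
  have htT : t < T := htu.trans huT
  have key := abs_prod_add_sub_prod_le (hr hs hst htT) (hr ht htu huT) (hr hu huv hvT)
    (hd hs hst htT)
    ((hd ht htu huT).trans (hb hs hst.le))
    ((hd ht htu huT).trans (hb (sub_pos.2 hst) (by linarith)))
    ((hd hu huv hvT).trans (hb hs (by linarith)))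
    ((hd hu huv hvT).trans (hb (sub_pos.2 hst) (by linarith)))
    ((hd hu huv hvT).trans (hb (sub_pos.2 htu) (by linarith)))
    (hd hs (show s < v by linarith) hvT)
    ((hr hu huv hvT).trans (hbg (sub_pos.2 huv)))
    (hclose (sub_pos.2 hst) (by linarith)) (hclose (sub_pos.2 htu) (by linarith))
    (hclose (sub_pos.2 huv) (by linarith))
  rw [sym₁ s t, sym₁ t u, sym₁ u v, sym₂ s t, sym₂ t u, sym₂ u v]
  simpa only [add_sub_cancel] using key

/-- Difference of fourth cumulants: under the covariance bounds, the integral of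
`ρ₁(s,t)ρ₁(t,u)ρ₁(u,v)ρ₁(v,s) - ρ₂(s,t)ρ₂(t,u)ρ₂(u,v)ρ₂(v,s)` over the simplex
`{0 < s < t < u < v < T}` is bounded by `C ⬝ T^H`. -/
theorem fourth_cumulant_difference_bound (H C₀ : ℝ) (hH : H ∈ Set.Ioo (0 : ℝ) (1/2))
    (hC₀ : 0 < C₀) :
    ∃ C : ℝ, 0 < C ∧ ∀ T : ℝ, 1 ≤ T → ∀ ρ₁ ρ₂ : ℝ × ℝ → ℝ,
      Measurable ρ₁ → Measurable ρ₂ →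
      (∀ x y : ℝ, ρ₁ (x, y) = ρ₁ (y, x)) →
      (∀ x y : ℝ, ρ₂ (x, y) = ρ₂ (y, x)) →
      (∀ s t : ℝ, 0 ≤ s → s < t → t ≤ T →
        |ρ₂ (t, s)| ≤ C₀ * min 1 ((t - s) ^ (2 * H - 2))) →
      (∀ s t : ℝ, 0 ≤ s → s < t → t ≤ T →
        |ρ₁ (t, s) - ρ₂ (t, s)| ≤
          C₀ * min 1 (min (s ^ (2 * H - 2)) ((t - s) ^ (H - 1)))) →
      |∫ p in {p : ℝ × ℝ × ℝ × ℝ |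
            0 < p.1 ∧ p.1 < p.2.1 ∧ p.2.1 < p.2.2.1 ∧ p.2.2.1 < p.2.2.2 ∧ p.2.2.2 < T},
          (ρ₁ (p.1, p.2.1) * ρ₁ (p.2.1, p.2.2.1) * ρ₁ (p.2.2.1, p.2.2.2) * ρ₁ (p.2.2.2, p.1)
            - ρ₂ (p.1, p.2.1) * ρ₂ (p.2.1, p.2.2.1) * ρ₂ (p.2.2.1, p.2.2.2)
              * ρ₂ (p.2.2.2, p.1))| ≤ C * T ^ H := by
  obtain ⟨hH0, hH2⟩ := hH
  set K : ℝ := 1 + -1 / (2 * H - 2 + 1)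
  have hKpos : 0 < K :=
    add_pos zero_lt_one (div_pos_of_neg_of_neg (by norm_num) (by linarith))
  refine ⟨9 * C₀ ^ 4 * (3 * (K ^ 3 / H)), by positivity, ?_⟩
  intro T hT ρ₁ ρ₂ _ _ sym₁ sym₂ hρ hδ
  have hT0 : 0 < T := zero_lt_one.trans_le hT
  set S : Set (ℝ × ℝ × ℝ × ℝ) := {p | 0 < p.1 ∧ p.1 < p.2.1 ∧ p.2.1 < p.2.2.1 ∧
    p.2.2.1 < p.2.2.2 ∧ p.2.2.2 < T} with hS
  have hSm : MeasurableSet S := by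
    rw [hS]
    measurability
  set b := truncKernel (2 * H - 2) T with hb
  set g := truncKernel (H - 1) T with hg
  have hbm : Measurable b := measurable_truncKernel _ _
  have hgm : Measurable g := measurable_truncKernel _ _
  have hbI : ∫⁻ x, b x ≤ ENNReal.ofReal K :=
    lintegral_truncKernel_le_of_lt_neg_one (by linarith)
  have hgI : ∫⁻ x, g x ≤ ENNReal.ofReal (T ^ H / H) := by
    simpa using lintegral_truncKernel_le_rpow (a := H - 1) (by linarith) hT0.le
  let P : (ℝ → ENNReal) → (ℝ → ENNReal) → (ℝ → ENNReal) → ℝ × ℝ × ℝ × ℝ → ENNReal :=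
    fun f₂ f₃ f₄ p => b p.1 * (f₂ (p.2.1 - p.1) *
      (f₃ (p.2.2.1 - p.2.1) * f₄ (p.2.2.2 - p.2.2.1)))
  have hPm : ∀ {f₂ f₃ f₄}, Measurable f₂ → Measurable f₃ → Measurable f₄ →
      Measurable (P f₂ f₃ f₄) := by
    intro f₂ f₃ f₄ h₂ h₃ h₄
    fun_prop
  have hPI : ∀ {f₂ f₃ f₄ : ℝ → ENNReal} {c₂ c₃ c₄ : ℝ}, Measurable f₂ → Measurable f₃ →
      Measurable f₄ → ∫⁻ x, f₂ x ≤ ENNReal.ofReal c₂ → ∫⁻ x, f₃ x ≤ ENNReal.ofReal c₃ →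
      ∫⁻ x, f₄ x ≤ ENNReal.ofReal c₄ → 0 ≤ c₂ → 0 ≤ c₃ →
      ∫⁻ p, P f₂ f₃ f₄ p ≤ ENNReal.ofReal (K * (c₂ * (c₃ * c₄))) := by
    intro f₂ f₃ f₄ c₂ c₃ c₄ h₂ h₃ h₄ i₂ i₃ i₄ p₂ p₃
    rw [lintegral_prod_increments hbm h₂ h₃ h₄, ENNReal.ofReal_mul hKpos.le,
      ENNReal.ofReal_mul p₂, ENNReal.ofReal_mul p₃]
    gcongr
  have hpt : ∀ p ∈ S,
      ‖ρ₁ (p.1, p.2.1) * ρ₁ (p.2.1, p.2.2.1) * ρ₁ (p.2.2.1, p.2.2.2) * ρ₁ (p.2.2.2, p.1)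
        - ρ₂ (p.1, p.2.1) * ρ₂ (p.2.1, p.2.2.1) * ρ₂ (p.2.2.1, p.2.2.2) * ρ₂ (p.2.2.2, p.1)‖ₑ ≤
      ENNReal.ofReal (9 * C₀ ^ 4) * (P b b g p + P b g b p + P g b b p) := by
    rintro ⟨s, t, u, v⟩ ⟨hs, hst, htu, huv, hvT⟩
    dsimp only at hs hst htu huv hvT
    have nonneg : ∀ {a x : ℝ}, 0 < x → 0 ≤ truncPow a x := fun hx => truncPow_nonneg hx.le
    have hx : 0 < t - s := sub_pos.2 hst
    have hy : 0 < u - t := sub_pos.2 htu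
    have hz : 0 < v - u := sub_pos.2 huv
    have hbs := nonneg (a := 2 * H - 2) hs
    have hbx := nonneg (a := 2 * H - 2) hx
    have hby := nonneg (a := 2 * H - 2) hy
    have hbz := nonneg (a := 2 * H - 2) hz
    have hgx := nonneg (a := H - 1) hx
    have hgy := nonneg (a := H - 1) hy
    have hgz := nonneg (a := H - 1) hz
    have hsT : s < T := by linarith
    have hxT : t - s < T := by linarith
    have hyT : u - t < T := by linarith
    have hzT : v - u < T := by linarith
    rw [Real.enorm_eq_ofReal_abs]
    refine (ENNReal.ofReal_le_ofReal
      (abs_cycle_prod_sub_le hH2 hC₀ sym₁ sym₂ hρ hδ hs hst htu huv hvT)).trans_eq ?_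
    simp only [P, hb, hg, truncKernel_of_mem hs hsT, truncKernel_of_mem hx hxT,
      truncKernel_of_mem hy hyT, truncKernel_of_mem hz hzT]
    rw [ENNReal.ofReal_mul (by positivity), ENNReal.ofReal_add (by positivity) (by positivity),
      ENNReal.ofReal_add (by positivity) (by positivity)]
    simp only [mul_assoc, ENNReal.ofReal_mul, hbs, hbx, hby, hgx, hgy]
  have hfinal : 0 ≤ 9 * C₀ ^ 4 * (3 * (K ^ 3 / H)) * T ^ H := by positivity
  rw [← Real.norm_eq_abs, ← ENNReal.ofReal_le_ofReal_iff hfinal, ofReal_norm]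
  calc _ ≤ _ := enorm_integral_le_lintegral_enorm _
    _ ≤ ∫⁻ p in S, ENNReal.ofReal (9 * C₀ ^ 4) * (P b b g p + P b g b p + P g b b p) :=
      setLIntegral_mono' hSm hpt
    _ ≤ ∫⁻ p, ENNReal.ofReal (9 * C₀ ^ 4) * (P b b g p + P b g b p + P g b b p) :=
      setLIntegral_le_lintegral _ _
    _ = ENNReal.ofReal (9 * C₀ ^ 4) *
        ((∫⁻ p, P b b g p) + (∫⁻ p, P b g b p) + ∫⁻ p, P g b b p) := by
      have hm₁ := hPm hbm hbm hgm
      have hm₂ := hPm hbm hgm hbm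
      have hm₃ := hPm hgm hbm hbm
      rw [lintegral_const_mul _ (by fun_prop), lintegral_add_right _ hm₃,
        lintegral_add_right _ hm₂]
    _ ≤ ENNReal.ofReal (9 * C₀ ^ 4) * (ENNReal.ofReal (K * (K * (K * (T ^ H / H)))) +
        ENNReal.ofReal (K * (K * (T ^ H / H * K))) +
        ENNReal.ofReal (K * (T ^ H / H * (K * K)))) := by
      have hTH : 0 ≤ T ^ H / H := by positivity
      gcongr
      · exact hPI hbm hbm hgm hbI hbI hgI hKpos.le hKpos.le
      · exact hPI hbm hgm hbm hbI hgI hbI hKpos.le hTH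
      · exact hPI hgm hbm hbm hgI hbI hbI hTH hKpos.le
    _ = ENNReal.ofReal (9 * C₀ ^ 4 * (3 * (K ^ 3 / H)) * T ^ H) := by
      rw [← ENNReal.ofReal_add (by positivity) (by positivity),
        ← ENNReal.ofReal_add (by positivity) (by positivity),
        ← ENNReal.ofReal_mul (by positivity)]
      congr 1
      ring
end

section
/- Let β > 0 and θ > 0. There exists a positive constant C such that for every s > 0, e^(−θs) ∫₀^s e^(θr) r^(β−1) dr ≤ C · min(s^(β−1), s^β). In particular, if β ∈ (0,1), there exists a positive constant C such that for every s > 0, e^(−θs) ∫₀^s e^(θr) r^(β−1) dr ≤ C · min(1, s^(β−1)). -/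
open MeasureTheory Real Set Filter

/-- On the upper half of `(0, s)` the powers of `r` and `s` are comparable. -/
lemma rpow_le_mul_rpow_of_half_le {r s : ℝ} (a : ℝ) (hs : 0 < s) (hr : s / 2 ≤ r) (hrs : r ≤ s) :
    r ^ a ≤ (1 + 2 ^ (-a)) * s ^ a := by
  have hsa : 0 < s ^ a := rpow_pos_of_pos hs a
  have h2 : (0 : ℝ) < 2 ^ (-a) := rpow_pos_of_pos two_pos _
  rcases le_total 0 a with ha | ha
  · have := rpow_le_rpow (by linarith) hrs ha
    nlinarith
  · have h := rpow_le_rpow_of_nonpos (by linarith) hr ha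
    rw [div_rpow hs.le zero_le_two, div_eq_mul_inv, ← rpow_neg zero_le_two] at h
    nlinarith

lemma exp_mul_rpow_le {a θ r s : ℝ} (hθ : 0 < θ) (hr : 0 < r) (hrs : r < s) :
    exp (θ * r) * r ^ a ≤
      (1 + 2 ^ (-a)) * s ^ a * exp (θ * r) + exp (θ * s) * (2 / (θ * s)) * r ^ a := by
  have hs : 0 < s := hr.trans hrs
  rcases le_total (s / 2) r with h | h
  · have h1 := mul_le_mul_of_nonneg_right
      (rpow_le_mul_rpow_of_half_le a hs h hrs.le) (exp_pos (θ * r)).le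
    have h2 : 0 ≤ exp (θ * s) * (2 / (θ * s)) * r ^ a := by positivity
    linarith
  · have h1 : exp (θ * r) ≤ exp (θ * s) * (2 / (θ * s)) := by
      have h3 : θ * s / 2 ≤ exp (θ * (s - r)) := by
        have := add_one_le_exp (θ * (s - r))
        nlinarith
      have h4 : exp (θ * s) = exp (θ * r) * exp (θ * (s - r)) := by
        rw [← exp_add]; ring_nf
      rw [← mul_div_assoc, le_div_iff₀ (by positivity), h4]
      nlinarith [exp_pos (θ * r)]
    have h2 := mul_le_mul_of_nonneg_right h1 (rpow_pos_of_pos hr a).le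
    have h5 : 0 ≤ (1 + 2 ^ (-a)) * s ^ a * exp (θ * r) := by positivity
    linarith

lemma integral_rpow_sub_one {β : ℝ} (hβ : 0 < β) (s : ℝ) :
    ∫ r in (0 : ℝ)..s, r ^ (β - 1) = s ^ β / β := by
  rw [integral_rpow (Or.inl (by linarith)), sub_add_cancel, zero_rpow hβ.ne', sub_zero]

lemma integral_exp_mul_le {θ : ℝ} (hθ : 0 < θ) (s : ℝ) :
    ∫ r in (0 : ℝ)..s, exp (θ * r) ≤ exp (θ * s) / θ := by
  rw [intervalIntegral.integral_comp_mul_left (fun x => exp x) hθ.ne', integral_exp, smul_eq_mul,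
    mul_zero, exp_zero, div_eq_inv_mul]
  exact mul_le_mul_of_nonneg_left (by linarith) (by positivity)

lemma intervalIntegrable_exp_mul_rpow {β : ℝ} (hβ : 0 < β) (θ s : ℝ) :
    IntervalIntegrable (fun r => exp (θ * r) * r ^ (β - 1)) volume 0 s :=
  (intervalIntegral.intervalIntegrable_rpow' (by linarith)).continuousOn_mul
    (by fun_prop)

lemma integral_exp_mul_rpow_le_rpow {β θ s : ℝ} (hβ : 0 < β) (hθ : 0 < θ) (hs : 0 < s) :
    ∫ r in (0 : ℝ)..s, exp (θ * r) * r ^ (β - 1) ≤ exp (θ * s) * (1 / β * s ^ β) := by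
  calc ∫ r in (0 : ℝ)..s, exp (θ * r) * r ^ (β - 1)
      ≤ ∫ r in (0 : ℝ)..s, exp (θ * s) * r ^ (β - 1) := by
        refine intervalIntegral.integral_mono_on_of_le_Ioo hs.le
          (intervalIntegrable_exp_mul_rpow hβ θ s)
          ((intervalIntegral.intervalIntegrable_rpow' (by linarith)).const_mul _) fun r hr => ?_
        have := hr.1
        have := hr.2.le
        gcongr
    _ = exp (θ * s) * (1 / β * s ^ β) := by
        rw [intervalIntegral.integral_const_mul, integral_rpow_sub_one hβ]; ring

lemma integral_exp_mul_rpow_le_rpow_sub_one {β θ s : ℝ} (hβ : 0 < β) (hθ : 0 < θ) (hs : 0 < s) :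
    ∫ r in (0 : ℝ)..s, exp (θ * r) * r ^ (β - 1) ≤
      exp (θ * s) * (((1 + 2 ^ (-(β - 1))) / θ + 2 / (θ * β)) * s ^ (β - 1)) := by
  have hexp : IntervalIntegrable (fun r => (1 + 2 ^ (-(β - 1))) * s ^ (β - 1) * exp (θ * r))
      volume 0 s := Continuous.intervalIntegrable (by fun_prop) _ _
  have hpow : IntervalIntegrable (fun r => exp (θ * s) * (2 / (θ * s)) * r ^ (β - 1))
      volume 0 s := (intervalIntegral.intervalIntegrable_rpow' (by linarith)).const_mul _
  calc ∫ r in (0 : ℝ)..s, exp (θ * r) * r ^ (β - 1)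
      ≤ ∫ r in (0 : ℝ)..s, ((1 + 2 ^ (-(β - 1))) * s ^ (β - 1) * exp (θ * r) +
          exp (θ * s) * (2 / (θ * s)) * r ^ (β - 1)) :=
        intervalIntegral.integral_mono_on_of_le_Ioo hs.le
          (intervalIntegrable_exp_mul_rpow hβ θ s) (hexp.add hpow)
          fun r hr => exp_mul_rpow_le hθ hr.1 hr.2
    _ = (1 + 2 ^ (-(β - 1))) * s ^ (β - 1) * (∫ r in (0 : ℝ)..s, exp (θ * r)) +
          exp (θ * s) * (2 / (θ * s)) * (s ^ β / β) := by
        rw [intervalIntegral.integral_add hexp hpow, intervalIntegral.integral_const_mul,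
          intervalIntegral.integral_const_mul, integral_rpow_sub_one hβ]
    _ ≤ (1 + 2 ^ (-(β - 1))) * s ^ (β - 1) * (exp (θ * s) / θ) +
          exp (θ * s) * (2 / (θ * s)) * (s ^ β / β) := by
        gcongr
        exact integral_exp_mul_le hθ s
    _ = exp (θ * s) * (((1 + 2 ^ (-(β - 1))) / θ + 2 / (θ * β)) * s ^ (β - 1)) := by
        have h : s ^ β = s ^ (β - 1) * s := by
          rw [← rpow_add_one hs.ne', sub_add_cancel]
        rw [h]
        field_simp

lemma min_rpow_sub_one_rpow_le {β s : ℝ} (hβ : 0 < β) (hβ1 : β < 1) (hs : 0 < s) :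
    min (s ^ (β - 1)) (s ^ β) ≤ min 1 (s ^ (β - 1)) := by
  refine le_min ?_ (min_le_left _ _)
  rcases le_total s 1 with h | h
  · exact (min_le_right _ _).trans (rpow_le_one hs.le h hβ.le)
  · exact (min_le_left _ _).trans (rpow_le_one_of_one_le_of_nonpos h (by linarith))

/-- Lemma 7.1 of the paper: for `β, θ > 0` the function
`s ↦ e^{-θ s} ∫₀^s e^{θ r} r^{β-1} dr` is bounded by `C ⬝ min(s^{β-1}, s^β)`;
in particular, for `β ∈ (0,1)` it is bounded by `C ⬝ min(1, s^{β-1})`. -/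
theorem ou_kernel_integral_bound (β θ : ℝ) (hβ : 0 < β) (hθ : 0 < θ) :
    (∃ C : ℝ, 0 < C ∧ ∀ s : ℝ, 0 < s →
      Real.exp (-θ * s) * ∫ r in Set.Ioo (0 : ℝ) s, Real.exp (θ * r) * r ^ (β - 1) ≤
        C * min (s ^ (β - 1)) (s ^ β)) ∧
    (β < 1 → ∃ C : ℝ, 0 < C ∧ ∀ s : ℝ, 0 < s →
      Real.exp (-θ * s) * ∫ r in Set.Ioo (0 : ℝ) s, Real.exp (θ * r) * r ^ (β - 1) ≤
        C * min 1 (s ^ (β - 1))) := by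
  have main : ∃ C : ℝ, 0 < C ∧ ∀ s : ℝ, 0 < s →
      Real.exp (-θ * s) * ∫ r in Set.Ioo (0 : ℝ) s, Real.exp (θ * r) * r ^ (β - 1) ≤
        C * min (s ^ (β - 1)) (s ^ β) := by
    refine ⟨max ((1 + 2 ^ (-(β - 1))) / θ + 2 / (θ * β)) (1 / β),
      lt_max_of_lt_right (by positivity), fun s hs => ?_⟩
    rw [← integral_Ioc_eq_integral_Ioo, ← intervalIntegral.integral_of_le hs.le, neg_mul, exp_neg,
      inv_mul_le_iff₀ (exp_pos _)]
    rcases min_choice (s ^ (β - 1)) (s ^ β) with h | h <;> rw [h]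
    · refine (integral_exp_mul_rpow_le_rpow_sub_one hβ hθ hs).trans ?_
      gcongr
      exact le_max_left _ _
    · refine (integral_exp_mul_rpow_le_rpow hβ hθ hs).trans ?_
      gcongr
      exact le_max_right _ _
  refine ⟨main, fun hβ1 => ?_⟩
  obtain ⟨C, hC, h⟩ := main
  exact ⟨C, hC, fun s hs => (h s hs).trans
    (mul_le_mul_of_nonneg_left (min_rpow_sub_one_rpow_le hβ hβ1 hs) hC.le)⟩
end

section
/- Let H ∈ (0,1). There exists a positive constant C such that for every t > 0, ∫₀^∞ e^(−x) ( ∫₀^t e^(y−t) (x+y)^(2H−2) dy ) dx ≤ C · min(1, t^(2H−2)). -/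
open MeasureTheory Real Set Filter

/-- The kernel `(x + y) ^ (2H - 2)` is dominated by a product kernel. -/
lemma add_rpow_le_rpow_mul_rpow {H x y : ℝ} (hH : H ≤ 1) (hx : 0 < x) (hy : 0 < y) :
    (x + y) ^ (2 * H - 2) ≤ x ^ (H - 1) * y ^ (H - 1) := by
  have h : (x + y) ^ (2 * H - 2) = ((x + y) ^ 2) ^ (H - 1) := by
    rw [← rpow_natCast (x + y) 2, ← rpow_mul (by positivity)]
    congr 1
    push_cast
    ring
  rw [h, ← mul_rpow hx.le hy.le]
  exact rpow_le_rpow_of_nonpos (by positivity) (by nlinarith [mul_pos hx hy]) (by linarith)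

lemma integrableOn_Ioo_rpow_sub_one {H : ℝ} (hH : 0 < H) {t : ℝ} (ht : 0 < t) :
    IntegrableOn (fun y : ℝ => y ^ (H - 1)) (Ioo 0 t) :=
  (intervalIntegral.integrableOn_Ioo_rpow_iff ht).2 (by linarith)

lemma setIntegral_Ioo_rpow_sub_one {H : ℝ} (hH : 0 < H) {t : ℝ} (ht : 0 < t) :
    ∫ y in Ioo 0 t, y ^ (H - 1) = t ^ H / H := by
  rw [← integral_Ioc_eq_integral_Ioo, ← intervalIntegral.integral_of_le ht.le,
    integral_rpow (Or.inl (by linarith))]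
  simp [zero_rpow hH.ne']

lemma integrableOn_Ioo_exp_sub (t : ℝ) :
    IntegrableOn (fun y : ℝ => exp (y - t)) (Ioo 0 t) :=
  (Continuous.integrableOn_Icc (by fun_prop)).mono_set Ioo_subset_Icc_self

lemma setIntegral_Ioo_exp_sub_le_one {t : ℝ} (ht : 0 < t) :
    ∫ y in Ioo 0 t, exp (y - t) ≤ 1 := by
  rw [← integral_Ioc_eq_integral_Ioo, ← intervalIntegral.integral_of_le ht.le,
    intervalIntegral.integral_comp_sub_right (fun y => exp y), integral_exp]
  simp [exp_nonneg]

/-- A pointwise bound on the kernel by a product kernel plus an exponential integrates to a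
bound on the double integral. -/
lemma integral_kernel_le_of_pointwise {H : ℝ} (hH : 0 < H) {t a b : ℝ} (ht : 0 < t)
    (hb : 0 ≤ b)
    (h : ∀ x y : ℝ, 0 < x → y ∈ Ioo 0 t →
      exp (y - t) * (x + y) ^ (2 * H - 2) ≤
        a * x ^ (H - 1) * y ^ (H - 1) + b * exp (y - t)) :
    (∫ x in Ioi (0 : ℝ),
        exp (-x) * ∫ y in Ioo (0 : ℝ) t, exp (y - t) * (x + y) ^ (2 * H - 2)) ≤
      a * (t ^ H / H) * Gamma H + b := by
  have inner_nonneg (x : ℝ) (hx : 0 < x) :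
      0 ≤ ∫ y in Ioo (0 : ℝ) t, exp (y - t) * (x + y) ^ (2 * H - 2) :=
    setIntegral_nonneg measurableSet_Ioo fun y hy =>
      mul_nonneg (exp_nonneg _) (rpow_nonneg (by linarith [hy.1]) _)
  have inner_le (x : ℝ) (hx : 0 < x) :
      ∫ y in Ioo (0 : ℝ) t, exp (y - t) * (x + y) ^ (2 * H - 2) ≤
        a * (t ^ H / H) * x ^ (H - 1) + b := by
    have hi := (integrableOn_Ioo_rpow_sub_one hH ht).const_mul (a * x ^ (H - 1))
    have hj := (integrableOn_Ioo_exp_sub t).const_mul b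
    calc _ ≤ ∫ y in Ioo 0 t, (a * x ^ (H - 1) * y ^ (H - 1) + b * exp (y - t)) := by
          refine integral_mono_of_nonneg ?_ (hi.add hj) ?_
          · filter_upwards [ae_restrict_mem measurableSet_Ioo] with y hy
            exact mul_nonneg (exp_nonneg _) (rpow_nonneg (by linarith [hy.1]) _)
          · filter_upwards [ae_restrict_mem measurableSet_Ioo] with y hy using h x y hx hy
      _ = a * x ^ (H - 1) * (t ^ H / H) + b * ∫ y in Ioo 0 t, exp (y - t) := by
          rw [integral_add hi hj, integral_const_mul, integral_const_mul,
            setIntegral_Ioo_rpow_sub_one hH ht]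
      _ ≤ _ := by
          nlinarith [mul_le_mul_of_nonneg_left (setIntegral_Ioo_exp_sub_le_one ht) hb]
  have hi := (GammaIntegral_convergent hH).const_mul (a * (t ^ H / H))
  have hj : IntegrableOn (fun x : ℝ => b * exp (-x)) (Ioi 0) :=
    (integrableOn_exp_neg_Ioi 0).const_mul b
  calc _ ≤ ∫ x in Ioi (0 : ℝ),
        (a * (t ^ H / H) * (exp (-x) * x ^ (H - 1)) + b * exp (-x)) := by
        refine integral_mono_of_nonneg ?_ (hi.add hj) ?_
        · filter_upwards [ae_restrict_mem measurableSet_Ioi] with x hx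
          exact mul_nonneg (exp_nonneg _) (inner_nonneg x hx)
        · filter_upwards [ae_restrict_mem measurableSet_Ioi] with x hx
          have := mul_le_mul_of_nonneg_left (inner_le x hx) (exp_nonneg (-x))
          linarith
    _ = _ := by
        rw [integral_add hi hj, integral_const_mul, integral_const_mul,
          ← Gamma_eq_integral hH, integral_exp_neg_Ioi_zero, mul_one]

lemma exp_neg_half_mul_rpow_le {H t : ℝ} (hH : 0 ≤ H) (ht : 1 ≤ t) :
    exp (-(t / 2)) * t ^ H ≤ 8 * t ^ (2 * H - 2) := by
  have h0 : 0 < t := by linarith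
  have hsq : t ^ 2 / 8 ≤ exp (t / 2) := by
    have := quadratic_le_exp_of_nonneg (x := t / 2) (by linarith)
    nlinarith
  have hexp : exp (-(t / 2)) * t ^ 2 ≤ 8 := by
    rw [exp_neg, inv_mul_le_iff₀ (exp_pos _)]
    linarith
  calc exp (-(t / 2)) * t ^ H ≤ exp (-(t / 2)) * t ^ (2 + (2 * H - 2)) := by
        gcongr
        linarith
    _ = exp (-(t / 2)) * t ^ 2 * t ^ (2 * H - 2) := by
        rw [rpow_add h0, rpow_two, mul_assoc]
    _ ≤ _ := by gcongr

lemma half_rpow_le {H t : ℝ} (hH : 0 ≤ H) (ht : 0 < t) :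
    (t / 2) ^ (2 * H - 2) ≤ 4 * t ^ (2 * H - 2) := by
  have h : (1 / 2 : ℝ) ^ (2 * H - 2) ≤ 4 :=
    calc (1 / 2 : ℝ) ^ (2 * H - 2) ≤ (1 / 2 : ℝ) ^ (-2 : ℝ) :=
          rpow_le_rpow_of_exponent_ge (by norm_num) (by norm_num) (by linarith)
      _ = 4 := by
          rw [rpow_neg (by norm_num), rpow_two]
          norm_num
  rw [div_eq_mul_one_div, mul_rpow ht.le (by norm_num), mul_comm]
  gcongr

/-- Lemma 7.2 of the paper: for `H ∈ (0,1)` there is a constant `C > 0` such that for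
all `t > 0`, `∫₀^∞ e^{-x} ∫₀^t e^{y-t} (x+y)^{2H-2} dy dx ≤ C ⬝ min(1, t^{2H-2})`. -/
theorem double_exponential_kernel_bound (H : ℝ) (hH : H ∈ Set.Ioo (0 : ℝ) 1) :
    ∃ C : ℝ, 0 < C ∧ ∀ t : ℝ, 0 < t →
      (∫ x in Set.Ioi (0 : ℝ),
        Real.exp (-x) * ∫ y in Set.Ioo (0 : ℝ) t, Real.exp (y - t) * (x + y) ^ (2 * H - 2)) ≤
      C * min 1 (t ^ (2 * H - 2)) := by
  obtain ⟨h0, h1⟩ := hH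
  have hΓ : 0 < Gamma H / H := div_pos (Gamma_pos_of_pos h0) h0
  refine ⟨8 * (Gamma H / H) + 4, by positivity, fun t ht => ?_⟩
  rcases le_total t 1 with htle | htge
  · rw [min_eq_left (one_le_rpow_of_pos_of_le_one_of_nonpos ht htle (by linarith))]
    refine (integral_kernel_le_of_pointwise h0 (a := 1) (b := 0) ht le_rfl ?_).trans ?_
    · intro x y hx hy
      have hk : 0 ≤ (x + y) ^ (2 * H - 2) := rpow_nonneg (by linarith [hy.1]) _
      have he : exp (y - t) ≤ 1 := exp_le_one_iff.2 (by linarith [hy.2])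
      have := add_rpow_le_rpow_mul_rpow h1.le hx hy.1
      have := mul_le_mul_of_nonneg_right he hk
      linarith
    · have hp : t ^ H ≤ 1 := rpow_le_one ht.le htle h0.le
      have := mul_le_mul_of_nonneg_right hp hΓ.le
      calc 1 * (t ^ H / H) * Gamma H + 0 = t ^ H * (Gamma H / H) := by ring
        _ ≤ _ := by linarith
  · rw [min_eq_right (rpow_le_one_of_one_le_of_nonpos htge (by linarith))]
    refine (integral_kernel_le_of_pointwise h0 (a := exp (-(t / 2)))
      (b := (t / 2) ^ (2 * H - 2)) ht (by positivity) ?_).trans ?_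
    · intro x y hx hy
      have hy0 : 0 < y := hy.1
      rcases le_total y (t / 2) with hyt | hyt
      · have he : exp (y - t) ≤ exp (-(t / 2)) := exp_le_exp.2 (by linarith)
        calc exp (y - t) * (x + y) ^ (2 * H - 2)
            ≤ exp (-(t / 2)) * (x ^ (H - 1) * y ^ (H - 1)) :=
              mul_le_mul he (add_rpow_le_rpow_mul_rpow h1.le hx hy0) (by positivity)
                (exp_nonneg _)
          _ ≤ _ := by
              rw [← mul_assoc]
              exact le_add_of_nonneg_right (by positivity)
      · have hk : (x + y) ^ (2 * H - 2) ≤ (t / 2) ^ (2 * H - 2) :=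
          rpow_le_rpow_of_nonpos (by linarith) (by linarith) (by linarith)
        calc exp (y - t) * (x + y) ^ (2 * H - 2)
            ≤ (t / 2) ^ (2 * H - 2) * exp (y - t) := by
              rw [mul_comm]
              gcongr
          _ ≤ _ := le_add_of_nonneg_left (by positivity)
    · have he := mul_le_mul_of_nonneg_right (exp_neg_half_mul_rpow_le h0.le htge) hΓ.le
      have hk := half_rpow_le h0.le ht
      calc exp (-(t / 2)) * (t ^ H / H) * Gamma H + (t / 2) ^ (2 * H - 2)
          = exp (-(t / 2)) * t ^ H * (Gamma H / H) + (t / 2) ^ (2 * H - 2) := by ring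
        _ ≤ _ := by linarith
end

section
/- Let H ∈ (0,1). Then lim_{t→∞} [ ∫₀^t e^{y} ( ∫₀^∞ e^{−x} (x+y)^(2H−2) dx ) dy ] / ( e^{t} t^(2H−2) ) = 1. -/
open MeasureTheory Real Set Filter

/-- Bernoulli's inequality for nonpositive exponents. -/
theorem one_add_mul_self_le_rpow_one_add_of_nonpos {s p : ℝ} (hs : -1 < s) (hp : p ≤ 0) :
    1 + p * s ≤ (1 + s) ^ p := by
  have hs' : 0 < 1 + s := by linarith
  rw [Real.rpow_def_of_pos hs']
  have hlog : Real.log (1 + s) ≤ s := by linarith [Real.log_le_sub_one_of_pos hs']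
  nlinarith [Real.add_one_le_exp (Real.log (1 + s) * p)]

/-- The tangent line of `u ↦ u ^ p` at `y > 0` lies below the graph when `p ≤ 0`. -/
theorem rpow_add_mul_rpow_sub_one_le_add_rpow {x y p : ℝ} (hx : 0 ≤ x) (hy : 0 < y) (hp : p ≤ 0) :
    y ^ p + p * y ^ (p - 1) * x ≤ (x + y) ^ p := by
  have hxy : 0 ≤ x / y := by positivity
  have h := one_add_mul_self_le_rpow_one_add_of_nonpos (s := x / y) (by linarith) hp
  have hsplit : x + y = y * (1 + x / y) := by field_simp; ring
  rw [hsplit, Real.mul_rpow hy.le (by positivity), Real.rpow_sub_one hy.ne']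
  calc y ^ p + p * (y ^ p / y) * x = y ^ p * (1 + p * (x / y)) := by ring
    _ ≤ _ := by gcongr

theorem add_rpow_le_half_mul_half {x y p : ℝ} (hx : 0 < x) (hy : 0 < y) (hp : p ≤ 0) :
    (x + y) ^ p ≤ x ^ (p / 2) * y ^ (p / 2) := by
  have hp2 : p / 2 ≤ 0 := by linarith
  calc (x + y) ^ p = (x + y) ^ (p / 2) * (x + y) ^ (p / 2) := by
        rw [← Real.rpow_add (by positivity)]; ring_nf
    _ ≤ _ := mul_le_mul (Real.rpow_le_rpow_of_nonpos hx (by linarith) hp2)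
        (Real.rpow_le_rpow_of_nonpos hy (by linarith) hp2) (by positivity) (by positivity)

theorem integrableOn_exp_neg_mul_id : IntegrableOn (fun x : ℝ => exp (-x) * x) (Ioi 0) := by
  have h := Real.GammaIntegral_convergent (s := 2) (by norm_num)
  norm_num at h
  exact h

theorem integral_exp_neg_mul_id : ∫ x in Ioi (0 : ℝ), exp (-x) * x = 1 := by
  have h := Real.Gamma_eq_integral (s := 2) (by norm_num)
  norm_num at h
  exact h.symm

theorem integrableOn_exp_neg_mul_add_rpow {y p : ℝ} (hy : 0 < y) (hp : p ≤ 0) :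
    IntegrableOn (fun x : ℝ => exp (-x) * (x + y) ^ p) (Ioi 0) := by
  refine Integrable.mono' ((integrableOn_exp_neg_Ioi 0).mul_const (y ^ p))
    (by fun_prop) ((ae_restrict_iff' measurableSet_Ioi).2 (ae_of_all _ fun x hx => ?_))
  have hx : 0 < x := hx
  rw [Real.norm_of_nonneg (by positivity)]
  gcongr ?_ * ?_
  exact Real.rpow_le_rpow_of_nonpos hy (by linarith) hp

theorem integral_exp_neg_mul_add_rpow_le {y p : ℝ} (hy : 0 < y) (hp : p ≤ 0) :
    ∫ x in Ioi (0 : ℝ), exp (-x) * (x + y) ^ p ≤ y ^ p := by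
  calc ∫ x in Ioi (0 : ℝ), exp (-x) * (x + y) ^ p
      ≤ ∫ x in Ioi (0 : ℝ), exp (-x) * y ^ p := by
        refine setIntegral_mono_on (integrableOn_exp_neg_mul_add_rpow hy hp)
          ((integrableOn_exp_neg_Ioi 0).mul_const (y ^ p)) measurableSet_Ioi fun x hx => ?_
        have hx : 0 < x := hx
        gcongr ?_ * ?_
        exact Real.rpow_le_rpow_of_nonpos hy (by linarith) hp
    _ = y ^ p := by rw [integral_mul_const, integral_exp_neg_Ioi_zero, one_mul]

theorem le_integral_exp_neg_mul_add_rpow {y p : ℝ} (hy : 0 < y) (hp : p ≤ 0) :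
    y ^ p + p * y ^ (p - 1) ≤ ∫ x in Ioi (0 : ℝ), exp (-x) * (x + y) ^ p := by
  have h₁ : IntegrableOn (fun x : ℝ => exp (-x) * y ^ p) (Ioi 0) :=
    (integrableOn_exp_neg_Ioi 0).mul_const (y ^ p)
  have h₂ : IntegrableOn (fun x : ℝ => exp (-x) * x * (p * y ^ (p - 1))) (Ioi 0) :=
    integrableOn_exp_neg_mul_id.mul_const _
  calc y ^ p + p * y ^ (p - 1)
      = ∫ x in Ioi (0 : ℝ), (exp (-x) * y ^ p + exp (-x) * x * (p * y ^ (p - 1))) := by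
        rw [integral_add h₁ h₂, integral_mul_const, integral_mul_const,
          integral_exp_neg_Ioi_zero, integral_exp_neg_mul_id, one_mul, one_mul]
    _ ≤ _ := by
        refine setIntegral_mono_on (h₁.add h₂) (integrableOn_exp_neg_mul_add_rpow hy hp)
          measurableSet_Ioi fun x hx => ?_
        calc exp (-x) * y ^ p + exp (-x) * x * (p * y ^ (p - 1))
            = exp (-x) * (y ^ p + p * y ^ (p - 1) * x) := by ring
          _ ≤ _ := by
            gcongr
            exact rpow_add_mul_rpow_sub_one_le_add_rpow (le_of_lt hx) hy hp

theorem integral_exp_neg_mul_add_rpow_le_Gamma {y p : ℝ} (hy : 0 < y) (hp : p ≤ 0)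
    (hp' : -2 < p) :
    ∫ x in Ioi (0 : ℝ), exp (-x) * (x + y) ^ p ≤ Real.Gamma (p / 2 + 1) * y ^ (p / 2) := by
  have hpos : 0 < p / 2 + 1 := by linarith
  have hint := Real.GammaIntegral_convergent hpos
  rw [Real.Gamma_eq_integral hpos, ← integral_mul_const]
  refine setIntegral_mono_on (integrableOn_exp_neg_mul_add_rpow hy hp) (hint.mul_const _)
    measurableSet_Ioi fun x hx => ?_
  rw [add_sub_cancel_right, mul_assoc]
  gcongr
  exact add_rpow_le_half_mul_half hx hy hp

theorem intervalIntegrable_exp_mul_integral_exp_neg_mul_add_rpow {p : ℝ} (hp : p ≤ 0)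
    (hp' : -2 < p) {t : ℝ} (ht : 0 ≤ t) :
    IntervalIntegrable (fun y : ℝ => exp y * ∫ x in Ioi (0 : ℝ), exp (-x) * (x + y) ^ p)
      volume 0 t := by
  have hbound : IntervalIntegrable (fun y : ℝ => exp t * (Real.Gamma (p / 2 + 1) * y ^ (p / 2)))
      volume 0 t :=
    ((intervalIntegral.intervalIntegrable_rpow' (by linarith)).const_mul _).const_mul _
  rw [intervalIntegrable_iff_integrableOn_Ioc_of_le ht] at hbound ⊢
  have hmeas : StronglyMeasurable
      (fun y : ℝ => ∫ x in Ioi (0 : ℝ), exp (-x) * (x + y) ^ p) := by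
    refine StronglyMeasurable.integral_prod_right (f := fun y x : ℝ => exp (-x) * (x + y) ^ p) ?_
    exact Measurable.stronglyMeasurable (by fun_prop)
  refine Integrable.mono' hbound
    (Real.measurable_exp.stronglyMeasurable.mul hmeas).aestronglyMeasurable
    ((ae_restrict_iff' measurableSet_Ioc).2 (ae_of_all _ fun y hy => ?_))
  have hnonneg : 0 ≤ ∫ x in Ioi (0 : ℝ), exp (-x) * (x + y) ^ p :=
    setIntegral_nonneg measurableSet_Ioi fun x hx =>
      mul_nonneg (exp_pos _).le (Real.rpow_nonneg (add_pos hx hy.1).le _)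
  rw [Real.norm_of_nonneg (by positivity)]
  exact mul_le_mul (exp_le_exp.2 hy.2) (integral_exp_neg_mul_add_rpow_le_Gamma hy.1 hp hp')
    hnonneg (exp_pos _).le

theorem hasDerivAt_exp_mul_rpow {y : ℝ} (hy : 0 < y) (p : ℝ) :
    HasDerivAt (fun y : ℝ => exp y * y ^ p) (exp y * (y ^ p + p * y ^ (p - 1))) y :=
  ((Real.hasDerivAt_exp y).mul (Real.hasDerivAt_rpow_const (Or.inl hy.ne'))).congr_deriv (by ring)

theorem integral_deriv_exp_mul_rpow {a b : ℝ} (ha : 0 < a) (hab : a ≤ b) (p : ℝ) :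
    IntervalIntegrable (fun y : ℝ => exp y * (y ^ p + p * y ^ (p - 1))) volume a b ∧
      ∫ y in a..b, exp y * (y ^ p + p * y ^ (p - 1)) = exp b * b ^ p - exp a * a ^ p := by
  have hpos : ∀ y ∈ uIcc a b, 0 < y := fun y hy => by
    rw [uIcc_of_le hab] at hy
    exact ha.trans_le hy.1
  have hint : IntervalIntegrable (fun y : ℝ => exp y * (y ^ p + p * y ^ (p - 1))) volume a b := by
    refine ContinuousOn.intervalIntegrable fun y hy => ContinuousAt.continuousWithinAt ?_
    have hy' := (hpos y hy).ne'
    fun_prop (disch := simp [hy'])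
  exact ⟨hint, intervalIntegral.integral_eq_sub_of_hasDerivAt
    (fun y hy => hasDerivAt_exp_mul_rpow (hpos y hy) p) hint⟩

/-- The derivative of `exp y * (y ^ p - 2 * p * y ^ (p - 1))` dominates `exp y * y ^ p`. -/
theorem rpow_le_deriv_majorant {y p : ℝ} (hp : p ≤ 0) (hp' : -2 < p) (hy : 6 ≤ y) :
    y ^ p ≤ (y ^ p + p * y ^ (p - 1)) -
      2 * p * (y ^ (p - 1) + (p - 1) * y ^ (p - 1 - 1)) := by
  have hy0 : 0 < y := by linarith
  have h₁ : y ^ (p - 1) = y ^ (p - 1 - 1) * y := by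
    rw [Real.rpow_sub_one hy0.ne' (p - 1)]; field_simp
  have h₂ : 0 ≤ y ^ (p - 1 - 1) * (-p * (y + 2 * (p - 1))) :=
    mul_nonneg (by positivity) (mul_nonneg (by linarith) (by linarith))
  rw [h₁]
  linarith

theorem exponential_kernel_integral_bounds {p : ℝ} (hp : p ≤ 0) (hp' : -2 < p) :
    ∃ c₁ c₂ : ℝ, ∀ t : ℝ, 6 ≤ t →
      exp t * t ^ p + c₁ ≤
        (∫ y in Ioo (0 : ℝ) t, exp y * ∫ x in Ioi (0 : ℝ), exp (-x) * (x + y) ^ p) ∧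
      (∫ y in Ioo (0 : ℝ) t, exp y * ∫ x in Ioi (0 : ℝ), exp (-x) * (x + y) ^ p) ≤
        exp t * t ^ p - 2 * p * (exp t * t ^ (p - 1)) + c₂ := by
  set f : ℝ → ℝ := fun y => exp y * ∫ x in Ioi (0 : ℝ), exp (-x) * (x + y) ^ p
  refine ⟨(∫ y in (0 : ℝ)..6, f y) - exp 6 * 6 ^ p,
    (∫ y in (0 : ℝ)..6, f y) - (exp 6 * 6 ^ p - 2 * p * (exp 6 * 6 ^ (p - 1))), fun t ht => ?_⟩
  have ht0 : (0 : ℝ) ≤ t := by linarith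
  have hint6 : IntervalIntegrable f volume 0 6 :=
    intervalIntegrable_exp_mul_integral_exp_neg_mul_add_rpow hp hp' (by norm_num)
  have hint : IntervalIntegrable f volume 6 t :=
    hint6.symm.trans (intervalIntegrable_exp_mul_integral_exp_neg_mul_add_rpow hp hp' ht0)
  rw [← integral_Ioc_eq_integral_Ioo, ← intervalIntegral.integral_of_le ht0,
    ← intervalIntegral.integral_add_adjacent_intervals hint6 hint]
  obtain ⟨hi₁, he₁⟩ := integral_deriv_exp_mul_rpow (by norm_num : (0 : ℝ) < 6) ht p
  obtain ⟨hi₂, he₂⟩ := integral_deriv_exp_mul_rpow (by norm_num : (0 : ℝ) < 6) ht (p - 1)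
  have hlower := intervalIntegral.integral_mono_on ht hi₁ hint fun y hy =>
    mul_le_mul_of_nonneg_left
      (le_integral_exp_neg_mul_add_rpow (by linarith [hy.1] : 0 < y) hp) (exp_pos y).le
  have hupper := intervalIntegral.integral_mono_on ht hint (hi₁.sub (hi₂.const_mul (2 * p)))
    fun y hy => (mul_le_mul_of_nonneg_left
      ((integral_exp_neg_mul_add_rpow_le (by linarith [hy.1] : 0 < y) hp).trans
        (rpow_le_deriv_majorant hp hp' hy.1)) (exp_pos y).le).trans_eq (by ring)
  rw [intervalIntegral.integral_sub hi₁ (hi₂.const_mul (2 * p)),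
    intervalIntegral.integral_const_mul, he₁, he₂] at hupper
  rw [he₁] at hlower
  constructor <;> linarith

/-- The limit from the proof of Lemma 7.2:
`lim_{t→∞} (∫₀^t e^y ∫₀^∞ e^{-x} (x+y)^{2H-2} dx dy) / (e^t t^{2H-2}) = 1`. -/
theorem exponential_kernel_ratio_limit (H : ℝ) (hH : H ∈ Set.Ioo (0 : ℝ) 1) :
    Filter.Tendsto
      (fun t : ℝ =>
        (∫ y in Set.Ioo (0 : ℝ) t,
          Real.exp y * ∫ x in Set.Ioi (0 : ℝ), Real.exp (-x) * (x + y) ^ (2 * H - 2)) /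
        (Real.exp t * t ^ (2 * H - 2)))
      Filter.atTop (nhds 1) := by
  obtain ⟨hH0, hH1⟩ := hH
  set p : ℝ := 2 * H - 2 with hp_def
  obtain ⟨c₁, c₂, hbounds⟩ :=
    exponential_kernel_integral_bounds (p := p) (by linarith) (by linarith)
  have hG : Tendsto (fun t : ℝ => exp t * t ^ p) atTop atTop := by
    refine (tendsto_exp_div_rpow_atTop (-p)).congr' ?_
    filter_upwards [eventually_gt_atTop 0] with t ht
    rw [Real.rpow_neg ht.le, div_inv_eq_mul]
  have hlower : Tendsto (fun t : ℝ => 1 + c₁ / (exp t * t ^ p)) atTop (nhds 1) := by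
    simpa using (hG.const_div_atTop c₁).const_add 1
  have hupper : Tendsto (fun t : ℝ => 1 - 2 * p / t + c₂ / (exp t * t ^ p)) atTop (nhds 1) := by
    simpa using ((tendsto_id.const_div_atTop (2 * p)).const_sub 1).add (hG.const_div_atTop c₂)
  refine tendsto_of_tendsto_of_tendsto_of_le_of_le' hlower hupper ?_ ?_
  · filter_upwards [eventually_ge_atTop 6] with t ht
    have ht0 : 0 < t := by linarith
    have hpos : 0 < exp t * t ^ p := by positivity
    rw [le_div_iff₀ hpos, add_mul, div_mul_cancel₀ _ hpos.ne', one_mul]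
    exact (hbounds t ht).1
  · filter_upwards [eventually_ge_atTop 6] with t ht
    have ht0 : 0 < t := by linarith
    have hpos : 0 < exp t * t ^ p := by positivity
    rw [div_le_iff₀ hpos, add_mul, div_mul_cancel₀ _ hpos.ne']
    refine (hbounds t ht).2.trans_eq ?_
    rw [Real.rpow_sub_one ht0.ne']
    ring
end

section
/- Let θ > 0 and H ∈ (0,1). There exists a positive constant C, depending only on θ and H, such that for all 0 < s < t, ( ∫₀^s e^(θ(u−s)) u^(H−1) du ) · ( ∫_s^t e^(θ(v−t)) v^(H−1) dv ) ≤ C · min(1, s^(2H−2), (t−s)^(H−1)). -/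
open MeasureTheory Real Set

lemma integrableOn_rpow_sub_one {H x : ℝ} (hH : 0 < H) (hx : 0 < x) :
    IntegrableOn (fun u : ℝ => u ^ (H - 1)) (Ioo 0 x) :=
  (intervalIntegral.integrableOn_Ioo_rpow_iff hx).2 (by linarith)

lemma setIntegral_rpow_sub_one {H x : ℝ} (hH : 0 < H) (hx : 0 < x) :
    ∫ u in Ioo 0 x, u ^ (H - 1) = x ^ H / H := by
  rw [← integral_Ioc_eq_integral_Ioo, ← intervalIntegral.integral_of_le hx.le,
    integral_rpow (Or.inl (by linarith))]
  simp [Real.zero_rpow hH.ne']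

lemma integrableOn_exp_mul_sub (θ x : ℝ) :
    IntegrableOn (fun u : ℝ => exp (θ * (u - x))) (Ioo 0 x) :=
  (Continuous.integrableOn_Icc (by fun_prop)).mono_set Ioo_subset_Icc_self

lemma setIntegral_exp_mul_sub_le {θ x : ℝ} (hθ : 0 < θ) (hx : 0 < x) :
    ∫ u in Ioo 0 x, exp (θ * (u - x)) ≤ 1 / θ := by
  have hderiv : ∀ u ∈ uIcc 0 x,
      HasDerivAt (fun u : ℝ => exp (θ * (u - x)) / θ) (exp (θ * (u - x))) u := by
    intro u _
    have h := ((((hasDerivAt_id u).sub_const x).const_mul θ).exp).div_const θ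
    simpa [hθ.ne'] using h
  rw [← integral_Ioc_eq_integral_Ioo, ← intervalIntegral.integral_of_le hx.le,
    intervalIntegral.integral_eq_sub_of_hasDerivAt hderiv
      (Continuous.intervalIntegrable (by fun_prop) _ _)]
  have : 0 < exp (θ * (0 - x)) / θ := by positivity
  simp only [sub_self, mul_zero, exp_zero]
  linarith

lemma integrableOn_exp_mul_sub_mul_rpow {θ H x : ℝ} (hθ : 0 < θ) (hH : 0 < H) (hx : 0 < x) :
    IntegrableOn (fun u : ℝ => exp (θ * (u - x)) * u ^ (H - 1)) (Ioo 0 x) := by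
  refine (integrableOn_rpow_sub_one hH hx).bdd_mul (c := 1)
    (Continuous.aestronglyMeasurable (by fun_prop)) ?_
  filter_upwards [ae_restrict_mem measurableSet_Ioo] with u hu
  rw [norm_of_nonneg (exp_pos _).le, exp_le_one_iff]
  exact mul_nonpos_of_nonneg_of_nonpos hθ.le (by linarith [hu.2])

lemma exp_mul_sub_mul_rpow_le {θ H u x : ℝ} (hθ : 0 < θ) (hH : H ∈ Ioo (0 : ℝ) 1)
    (hu : u ∈ Ioo 0 x) :
    exp (θ * (u - x)) * u ^ (H - 1) ≤
      2 * x ^ (H - 1) * exp (θ * (u - x)) + 2 / (θ * x) * u ^ (H - 1) := by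
  obtain ⟨hu0, hux⟩ := hu
  have hx : 0 < x := hu0.trans hux
  have hup : 0 < u ^ (H - 1) := rpow_pos_of_pos hu0 _
  have hxp : 0 < x ^ (H - 1) := rpow_pos_of_pos hx _
  have he : 0 < exp (θ * (u - x)) := exp_pos _
  rcases le_total (x / 2) u with h | h
  · have hhalf : u ^ (H - 1) ≤ 2 * x ^ (H - 1) := by
      calc u ^ (H - 1) ≤ (x / 2) ^ (H - 1) :=
            rpow_le_rpow_of_nonpos (by positivity) h (by linarith [hH.2])
        _ = 2 ^ (1 - H) * x ^ (H - 1) := by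
            rw [div_rpow hx.le zero_le_two, div_eq_mul_inv, ← rpow_neg zero_le_two, neg_sub,
              mul_comm]
        _ ≤ 2 * x ^ (H - 1) := by
            gcongr
            calc (2 : ℝ) ^ (1 - H) ≤ 2 ^ (1 : ℝ) :=
                  rpow_le_rpow_of_exponent_le one_le_two (by linarith [hH.1])
              _ = 2 := rpow_one 2
    have : 0 < 2 / (θ * x) * u ^ (H - 1) := by positivity
    nlinarith
  · have hexp : exp (θ * (u - x)) ≤ 2 / (θ * x) := by
      calc exp (θ * (u - x)) ≤ exp (-(θ * x / 2)) := by
            gcongr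
            nlinarith
        _ ≤ (θ * x / 2)⁻¹ := by
            rw [exp_neg]
            gcongr
            linarith [add_one_le_exp (θ * x / 2)]
        _ = 2 / (θ * x) := inv_div _ _
    have : 0 < 2 * x ^ (H - 1) * exp (θ * (u - x)) := by positivity
    nlinarith

lemma setIntegral_exp_mul_sub_mul_rpow_le_rpow {θ H x : ℝ} (hθ : 0 < θ)
    (hH : H ∈ Ioo (0 : ℝ) 1) (hx : 0 < x) :
    ∫ u in Ioo 0 x, exp (θ * (u - x)) * u ^ (H - 1) ≤
      (2 / θ + 2 / (θ * H)) * x ^ (H - 1) := by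
  have hH0 : 0 < H := hH.1
  have hi₁ := (integrableOn_exp_mul_sub θ x).const_mul (2 * x ^ (H - 1))
  have hi₂ := (integrableOn_rpow_sub_one hH0 hx).const_mul (2 / (θ * x))
  calc ∫ u in Ioo 0 x, exp (θ * (u - x)) * u ^ (H - 1)
      ≤ ∫ u in Ioo 0 x,
          (2 * x ^ (H - 1) * exp (θ * (u - x)) + 2 / (θ * x) * u ^ (H - 1)) :=
        setIntegral_mono_on (integrableOn_exp_mul_sub_mul_rpow hθ hH0 hx) (hi₁.add hi₂)
          measurableSet_Ioo fun u hu => exp_mul_sub_mul_rpow_le hθ hH hu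
    _ = 2 * x ^ (H - 1) * (∫ u in Ioo 0 x, exp (θ * (u - x))) +
          2 / (θ * x) * (x ^ H / H) := by
        rw [integral_add hi₁ hi₂, integral_const_mul, integral_const_mul,
          setIntegral_rpow_sub_one hH0 hx]
    _ ≤ 2 * x ^ (H - 1) * (1 / θ) + 2 / (θ * x) * (x ^ H / H) := by
        gcongr
        exact setIntegral_exp_mul_sub_le hθ hx
    _ = (2 / θ + 2 / (θ * H)) * x ^ (H - 1) := by
        rw [rpow_sub_one hx.ne']
        field_simp

lemma setIntegral_exp_mul_sub_mul_rpow_le_of_le_one {θ H x : ℝ} (hθ : 0 < θ)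
    (hH : 0 < H) (hx : 0 < x) (hx1 : x ≤ 1) :
    ∫ u in Ioo 0 x, exp (θ * (u - x)) * u ^ (H - 1) ≤ 1 / H := by
  calc ∫ u in Ioo 0 x, exp (θ * (u - x)) * u ^ (H - 1)
      ≤ ∫ u in Ioo 0 x, u ^ (H - 1) := by
        refine setIntegral_mono_on (integrableOn_exp_mul_sub_mul_rpow hθ hH hx)
          (integrableOn_rpow_sub_one hH hx) measurableSet_Ioo fun u hu => ?_
        refine mul_le_of_le_one_left (rpow_nonneg hu.1.le _) (exp_le_one_iff.2 ?_)
        exact mul_nonpos_of_nonneg_of_nonpos hθ.le (by linarith [hu.2])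
    _ = x ^ H / H := setIntegral_rpow_sub_one hH hx
    _ ≤ 1 / H := by
        gcongr
        exact rpow_le_one hx.le hx1 hH.le

lemma exists_setIntegral_exp_mul_sub_mul_rpow_le {θ H : ℝ} (hθ : 0 < θ)
    (hH : H ∈ Ioo (0 : ℝ) 1) :
    ∃ K : ℝ, 0 < K ∧ ∀ x : ℝ, 0 < x →
      ∫ u in Ioo 0 x, exp (θ * (u - x)) * u ^ (H - 1) ≤ K ∧
      ∫ u in Ioo 0 x, exp (θ * (u - x)) * u ^ (H - 1) ≤ K * x ^ (H - 1) := by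
  have hH0 : 0 < H := hH.1
  have hc₁ : 0 < 2 / θ + 2 / (θ * H) := by positivity
  have hc₂ : 0 < 1 / H := by positivity
  refine ⟨2 / θ + 2 / (θ * H) + 1 / H, by positivity, fun x hx => ?_⟩
  have hxp : 0 < x ^ (H - 1) := rpow_pos_of_pos hx _
  have hdecay := setIntegral_exp_mul_sub_mul_rpow_le_rpow hθ hH hx
  refine ⟨?_, by nlinarith⟩
  rcases le_total x 1 with hx1 | hx1
  · linarith [setIntegral_exp_mul_sub_mul_rpow_le_of_le_one hθ hH0 hx hx1]
  · have : x ^ (H - 1) ≤ 1 := rpow_le_one_of_one_le_of_nonpos hx1 (by linarith [hH.2])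
    nlinarith

/-- The core estimate for `|ρ₁(t,s) - ρ₂(t,s)| ≤ C min(1, s^{2H-2}, (t-s)^{H-1})`:
`(∫₀^s e^{θ(u-s)} u^{H-1} du) ⬝ (∫_s^t e^{θ(v-t)} v^{H-1} dv)
  ≤ C ⬝ min(1, s^{2H-2}, (t-s)^{H-1})`. -/
theorem ou_covariance_difference_kernel_bound (θ H : ℝ) (hθ : 0 < θ)
    (hH : H ∈ Set.Ioo (0 : ℝ) 1) :
    ∃ C : ℝ, 0 < C ∧ ∀ s t : ℝ, 0 < s → s < t →
      (∫ u in Set.Ioo (0 : ℝ) s, Real.exp (θ * (u - s)) * u ^ (H - 1)) *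
        (∫ v in Set.Ioo s t, Real.exp (θ * (v - t)) * v ^ (H - 1)) ≤
      C * min 1 (min (s ^ (2 * H - 2)) ((t - s) ^ (H - 1))) := by
  obtain ⟨K, hK, hbound⟩ := exists_setIntegral_exp_mul_sub_mul_rpow_le hθ hH
  refine ⟨K * K, by positivity, fun s t hs hst => ?_⟩
  have ht : 0 < t := hs.trans hst
  have hH1 : H - 1 ≤ 0 := by linarith [hH.2]
  obtain ⟨hs₁, hs₂⟩ := hbound s hs
  obtain ⟨ht₁, ht₂⟩ := hbound t ht
  have hB : ∫ v in Ioo s t, exp (θ * (v - t)) * v ^ (H - 1) ≤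
      ∫ v in Ioo 0 t, exp (θ * (v - t)) * v ^ (H - 1) := by
    refine setIntegral_mono_set (integrableOn_exp_mul_sub_mul_rpow hθ hH.1 ht) ?_
      (Ioo_subset_Ioo_left hs.le).eventuallyLE
    filter_upwards [ae_restrict_mem measurableSet_Ioo] with v hv
    exact mul_nonneg (exp_pos _).le (rpow_nonneg hv.1.le _)
  have hB₀ : 0 ≤ ∫ v in Ioo s t, exp (θ * (v - t)) * v ^ (H - 1) :=
    setIntegral_nonneg measurableSet_Ioo fun v hv =>
      mul_nonneg (exp_pos _).le (rpow_nonneg (hs.trans hv.1).le _)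
  have hts : t ^ (H - 1) ≤ s ^ (H - 1) := rpow_le_rpow_of_nonpos hs hst.le hH1
  have htd : t ^ (H - 1) ≤ (t - s) ^ (H - 1) :=
    rpow_le_rpow_of_nonpos (sub_pos.2 hst) (by linarith) hH1
  have hsp : 0 < s ^ (H - 1) := rpow_pos_of_pos hs _
  have hsq : s ^ (2 * H - 2) = s ^ (H - 1) * s ^ (H - 1) := by
    rw [← rpow_add hs]
    ring_nf
  have hKK : 0 ≤ K * K := by positivity
  rw [mul_min_of_nonneg _ _ hKK, mul_min_of_nonneg _ _ hKK]
  refine le_min ?_ (le_min ?_ ?_)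
  · rw [mul_one]
    exact mul_le_mul hs₁ (hB.trans ht₁) hB₀ hK.le
  · rw [hsq, mul_mul_mul_comm]
    exact mul_le_mul hs₂ (hB.trans (ht₂.trans (by gcongr))) hB₀ (by positivity)
  · rw [mul_assoc]
    exact mul_le_mul hs₁ (hB.trans (ht₂.trans (by gcongr))) hB₀ hK.le
end

section
/- Let H ∈ (0, 1/2). There exists a positive constant C, depending only on H, such that for every T ≥ 1, ∫∫_{0<s<t<T} min(1, s^(2H−2)) · min(1, (t−s)^(H−1)) dt ds ≤ C · T^H. -/
open MeasureTheory Real Set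

/-- The truncated power `min 1 (s ^ a)` is integrable on the half-line when `a < -1`. -/
lemma integrableOn_Ioi_min_one_rpow {a : ℝ} (ha : a < -1) :
    IntegrableOn (fun s : ℝ => min 1 (s ^ a)) (Ioi 0) := by
  have hmeas : Measurable fun s : ℝ => min 1 (s ^ a) := by fun_prop
  rw [← Ioc_union_Ioi_eq_Ioi (zero_le_one' ℝ)]
  refine IntegrableOn.union ?_ ?_
  · have hone : IntegrableOn (fun _ : ℝ => (1 : ℝ)) (Ioc 0 1) := by simp
    refine hone.mono' hmeas.aestronglyMeasurable ?_
    filter_upwards [ae_restrict_mem measurableSet_Ioc] with s hs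
    rw [Real.norm_of_nonneg (le_min zero_le_one (rpow_nonneg hs.1.le _))]
    exact min_le_left _ _
  · refine (integrableOn_Ioi_rpow_of_lt ha one_pos).mono' hmeas.aestronglyMeasurable ?_
    filter_upwards [ae_restrict_mem measurableSet_Ioi] with s hs
    have hs0 : 0 ≤ s := zero_le_one.trans (le_of_lt hs)
    rw [Real.norm_of_nonneg (le_min zero_le_one (rpow_nonneg hs0 _))]
    exact min_le_right _ _

/-- The integral over the plane of `f s * g (t - s)` factorizes. -/
lemma integrable_and_integral_mul_sub {f g : ℝ → ℝ} (hf : Integrable f) (hg : Integrable g) :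
    Integrable (fun p : ℝ × ℝ => f p.1 * g (p.2 - p.1)) ∧
      ∫ p : ℝ × ℝ, f p.1 * g (p.2 - p.1) = (∫ s, f s) * ∫ u, g u := by
  have hmp : MeasurePreserving (MeasurableEquiv.shearAddRight ℝ).symm
      (volume : Measure (ℝ × ℝ)) volume :=
    measurePreserving_prod_neg_add volume volume
  have heq : (fun p : ℝ × ℝ => f p.1 * g (p.2 - p.1)) =
      (fun q : ℝ × ℝ => f q.1 * g q.2) ∘ (MeasurableEquiv.shearAddRight ℝ).symm := by
    funext p
    change _ = f p.1 * g (-p.1 + p.2)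
    rw [sub_eq_neg_add]
  rw [heq]
  refine ⟨(hmp.integrable_comp_emb (MeasurableEquiv.measurableEmbedding _)).2 (hf.mul_prod hg), ?_⟩
  exact (hmp.integral_comp (MeasurableEquiv.measurableEmbedding _) _).trans
    (integral_prod_mul f g)

/-- For `H ∈ (0,1/2)` there is `C > 0` (depending only on `H`) such that for all `T ≥ 1`,
`∫∫_{0<s<t<T} min(1,s^{2H-2}) ⬝ min(1,(t-s)^{H-1}) dt ds ≤ C ⬝ T^H`. -/
theorem second_cumulant_simplex_bound (H : ℝ) (hH : H ∈ Set.Ioo (0 : ℝ) (1/2)) :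
    ∃ C : ℝ, 0 < C ∧ ∀ T : ℝ, 1 ≤ T →
      (∫ p in {p : ℝ × ℝ | 0 < p.1 ∧ p.1 < p.2 ∧ p.2 < T},
        min 1 (p.1 ^ (2 * H - 2)) * min 1 ((p.2 - p.1) ^ (H - 1))) ≤ C * T ^ H := by
  obtain ⟨hH0, hH1⟩ := hH
  set A : ℝ := ∫ s in Ioi (0 : ℝ), min 1 (s ^ (2 * H - 2))
  have hA0 : 0 ≤ A := setIntegral_nonneg measurableSet_Ioi fun s hs =>
    le_min zero_le_one (rpow_nonneg (le_of_lt hs) _)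
  refine ⟨(A + 1) / H, by positivity, fun T hT => ?_⟩
  have hT0 : 0 ≤ T := zero_le_one.trans hT
  set f : ℝ → ℝ := (Ioi 0).indicator fun s => min 1 (s ^ (2 * H - 2)) with hfdef
  set g : ℝ → ℝ := (Ioc 0 T).indicator fun u => u ^ (H - 1) with hgdef
  have hf : Integrable f :=
    (integrableOn_Ioi_min_one_rpow (by linarith)).integrable_indicator measurableSet_Ioi
  have hg : Integrable g := by
    refine IntegrableOn.integrable_indicator ?_ measurableSet_Ioc
    exact (intervalIntegrable_iff_integrableOn_Ioc_of_le hT0).1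
      (intervalIntegral.intervalIntegrable_rpow' (by linarith))
  have hf0 : ∀ s, 0 ≤ f s := indicator_nonneg fun s hs =>
    le_min zero_le_one (rpow_nonneg (le_of_lt hs) _)
  have hg0 : ∀ u, 0 ≤ g u := indicator_nonneg fun u hu => rpow_nonneg hu.1.le _
  have hfi : ∫ s, f s = A := integral_indicator measurableSet_Ioi
  have hgi : ∫ u, g u = T ^ H / H := by
    rw [hgdef, integral_indicator measurableSet_Ioc, ← intervalIntegral.integral_of_le hT0,
      integral_rpow (Or.inl (by linarith))]
    simp [zero_rpow hH0.ne']
  obtain ⟨hint, hprod⟩ := integrable_and_integral_mul_sub hf hg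
  have hS : MeasurableSet {p : ℝ × ℝ | 0 < p.1 ∧ p.1 < p.2 ∧ p.2 < T} :=
    (measurableSet_lt measurable_const measurable_fst).inter
      ((measurableSet_lt measurable_fst measurable_snd).inter
        (measurableSet_lt measurable_snd measurable_const))
  rw [← integral_indicator hS]
  calc _ ≤ ∫ p : ℝ × ℝ, f p.1 * g (p.2 - p.1) := by
        refine integral_mono_of_nonneg (ae_of_all _ ?_) hint (ae_of_all _ ?_)
        · refine indicator_nonneg fun p hp => mul_nonneg ?_ ?_
          · exact le_min zero_le_one (rpow_nonneg hp.1.le _)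
          · exact le_min zero_le_one (rpow_nonneg (sub_nonneg.2 hp.2.1.le) _)
        · refine indicator_le' (fun p hp => ?_) (fun p _ => mul_nonneg (hf0 _) (hg0 _))
          obtain ⟨h0, hst, htT⟩ := hp
          have hu : p.2 - p.1 ∈ Ioc 0 T := ⟨sub_pos.2 hst, by linarith⟩
          rw [hfdef, hgdef, indicator_of_mem (mem_Ioi.2 h0), indicator_of_mem hu]
          exact mul_le_mul_of_nonneg_left (min_le_right _ _)
            (le_min zero_le_one (rpow_nonneg h0.le _))
    _ = A * (T ^ H / H) := by rw [hprod, hfi, hgi]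
    _ ≤ (A + 1) * (T ^ H / H) := by gcongr; linarith
    _ = (A + 1) / H * T ^ H := by ring
end

section
/- Let H ∈ (0, 1/2). There exists a positive constant C, depending only on H, such that for every T ≥ 1, ∫∫∫_{0<r<s<t<T} min(1, r^(2H−2)) · min(1, s^(2H−2)) · min(1, (t−r)^(H−1)) dr ds dt ≤ C · T^H. -/
open MeasureTheory Real Set

/-- A truncated power `min 1 (x ^ a)` with `a < -1` has finite integral over `(0, ∞)`. -/
theorem lintegral_Ioi_min_one_rpow_lt_top {a : ℝ} (ha : a < -1) :
    ∫⁻ x in Ioi (0 : ℝ), ENNReal.ofReal (min 1 (x ^ a)) < ⊤ := by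
  rw [← Ioc_union_Ioi_eq_Ioi (zero_le_one' ℝ)]
  refine (lintegral_union_le _ _ _).trans_lt (ENNReal.add_lt_top.2 ⟨?_, ?_⟩)
  · calc ∫⁻ x in Ioc (0 : ℝ) 1, ENNReal.ofReal (min 1 (x ^ a))
        ≤ ∫⁻ _ in Ioc (0 : ℝ) 1, 1 := by
          refine lintegral_mono fun x => ?_
          simp
      _ < ⊤ := by simp
  · calc ∫⁻ x in Ioi (1 : ℝ), ENNReal.ofReal (min 1 (x ^ a))
        ≤ ∫⁻ x in Ioi (1 : ℝ), ENNReal.ofReal (x ^ a) :=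
          lintegral_mono fun x => ENNReal.ofReal_le_ofReal (min_le_right _ _)
      _ < ⊤ := (integrableOn_Ioi_rpow_of_lt ha one_pos).lintegral_lt_top

/-- A truncated power `min 1 (x ^ (b - 1))` with `0 < b` integrates over `(0, T]` to at most
`T ^ b / b`. -/
theorem lintegral_Ioc_min_one_rpow_le {b T : ℝ} (hb : 0 < b) (hT : 0 ≤ T) :
    ∫⁻ x in Ioc 0 T, ENNReal.ofReal (min 1 (x ^ (b - 1))) ≤ ENNReal.ofReal (T ^ b / b) := by
  have hint : IntegrableOn (fun x : ℝ => x ^ (b - 1)) (Ioc 0 T) :=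
    (intervalIntegrable_iff_integrableOn_Ioc_of_le hT).1
      (intervalIntegral.intervalIntegrable_rpow' (by linarith))
  have hval : ∫ x in Ioc 0 T, x ^ (b - 1) = T ^ b / b := by
    rw [← intervalIntegral.integral_of_le hT, integral_rpow (Or.inl (by linarith))]
    simp [Real.zero_rpow hb.ne']
  calc ∫⁻ x in Ioc 0 T, ENNReal.ofReal (min 1 (x ^ (b - 1)))
      ≤ ∫⁻ x in Ioc 0 T, ENNReal.ofReal (x ^ (b - 1)) :=
        lintegral_mono fun x => ENNReal.ofReal_le_ofReal (min_le_right _ _)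
    _ = ENNReal.ofReal (T ^ b / b) := by
        rw [← hval, ofReal_integral_eq_lintegral_ofReal hint]
        filter_upwards [ae_restrict_mem measurableSet_Ioc] with x hx
        exact Real.rpow_nonneg hx.1.le _

/-- The integral of `f r * f s * g (t - r)` over all `(r, s, t)` factorizes. -/
theorem lintegral_mul_mul_comp_sub {f g : ℝ → ENNReal} (hf : Measurable f) (hg : Measurable g) :
    ∫⁻ p : ℝ × ℝ × ℝ, f p.1 * (f p.2.1 * g (p.2.2 - p.1)) =
      (∫⁻ x, f x) * ((∫⁻ x, f x) * ∫⁻ x, g x) := by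
  rw [Measure.volume_eq_prod, lintegral_prod _ (by fun_prop), ← lintegral_mul_const _ hf]
  refine lintegral_congr fun r => ?_
  dsimp only
  rw [lintegral_const_mul _ (by fun_prop), Measure.volume_eq_prod,
    lintegral_prod_mul (g := fun t => g (t - r)) hf.aemeasurable
      (by fun_prop), lintegral_sub_right_eq_self g r]

/-- For `H ∈ (0,1/2)` there is `C > 0` (depending only on `H`) such that for all `T ≥ 1`,
`∫∫∫_{0<r<s<t<T} min(1,r^{2H-2}) min(1,s^{2H-2}) min(1,(t-r)^{H-1}) dr ds dt ≤ C ⬝ T^H`. -/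
theorem third_cumulant_simplex_bound (H : ℝ) (hH : H ∈ Set.Ioo (0 : ℝ) (1/2)) :
    ∃ C : ℝ, 0 < C ∧ ∀ T : ℝ, 1 ≤ T →
      (∫ p in {p : ℝ × ℝ × ℝ | 0 < p.1 ∧ p.1 < p.2.1 ∧ p.2.1 < p.2.2 ∧ p.2.2 < T},
        min 1 (p.1 ^ (2 * H - 2)) * min 1 (p.2.1 ^ (2 * H - 2))
          * min 1 ((p.2.2 - p.1) ^ (H - 1))) ≤ C * T ^ H := by
  obtain ⟨hH0, hH1⟩ := hH
  let f : ℝ → ENNReal := (Ioi 0).indicator fun x => ENNReal.ofReal (min 1 (x ^ (2 * H - 2)))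
  have hf : Measurable f := Measurable.indicator (by fun_prop) measurableSet_Ioi
  have hf_top : ∫⁻ x, f x ≠ ⊤ := by
    rw [lintegral_indicator measurableSet_Ioi]
    exact (lintegral_Ioi_min_one_rpow_lt_top (by linarith)).ne
  set A := (∫⁻ x, f x).toReal with hA
  have hA0 : 0 ≤ A := ENNReal.toReal_nonneg
  refine ⟨A * A / H + 1, by positivity, fun T hT => ?_⟩
  let g : ℝ → ENNReal := (Ioc 0 T).indicator fun x => ENNReal.ofReal (min 1 (x ^ (H - 1)))
  have hg : Measurable g := Measurable.indicator (by fun_prop) measurableSet_Ioc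
  have hg_le : ∫⁻ x, g x ≤ ENNReal.ofReal (T ^ H / H) := by
    rw [lintegral_indicator measurableSet_Ioc]
    exact lintegral_Ioc_min_one_rpow_le hH0 (by linarith)
  have hTH : 0 ≤ T ^ H := Real.rpow_nonneg (by linarith) _
  have hle : ∫⁻ p in {p : ℝ × ℝ × ℝ | 0 < p.1 ∧ p.1 < p.2.1 ∧ p.2.1 < p.2.2 ∧ p.2.2 < T},
      ENNReal.ofReal ‖min 1 (p.1 ^ (2 * H - 2)) * min 1 (p.2.1 ^ (2 * H - 2))
          * min 1 ((p.2.2 - p.1) ^ (H - 1))‖ ≤ ENNReal.ofReal (A * A / H * T ^ H) := by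
    calc _ ≤ ∫⁻ p in {p : ℝ × ℝ × ℝ | 0 < p.1 ∧ p.1 < p.2.1 ∧ p.2.1 < p.2.2 ∧ p.2.2 < T},
          f p.1 * (f p.2.1 * g (p.2.2 - p.1)) := by
          refine setLIntegral_mono (by fun_prop) ?_
          rintro ⟨r, s, t⟩ ⟨hr, hrs, hst, htT⟩
          dsimp only at hr hrs hst htT ⊢
          have hs : 0 < s := hr.trans hrs
          have htr : 0 < t - r := by linarith
          have hfr : f r = ENNReal.ofReal (min 1 (r ^ (2 * H - 2))) :=
            indicator_of_mem (mem_Ioi.2 hr) _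
          have hfs : f s = ENNReal.ofReal (min 1 (s ^ (2 * H - 2))) :=
            indicator_of_mem (mem_Ioi.2 hs) _
          have hgtr : g (t - r) = ENNReal.ofReal (min 1 ((t - r) ^ (H - 1))) :=
            indicator_of_mem (mem_Ioc.2 ⟨htr, by linarith⟩) _
          rw [hfr, hfs, hgtr, Real.norm_of_nonneg (by positivity), mul_assoc,
            ENNReal.ofReal_mul (by positivity), ENNReal.ofReal_mul (by positivity)]
      _ ≤ ∫⁻ p : ℝ × ℝ × ℝ, f p.1 * (f p.2.1 * g (p.2.2 - p.1)) := setLIntegral_le_lintegral _ _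
      _ = ENNReal.ofReal A * (ENNReal.ofReal A * ∫⁻ x, g x) := by
          rw [lintegral_mul_mul_comp_sub hf hg, hA, ENNReal.ofReal_toReal hf_top]
      _ ≤ ENNReal.ofReal A * (ENNReal.ofReal A * ENNReal.ofReal (T ^ H / H)) := by gcongr
      _ = ENNReal.ofReal (A * A / H * T ^ H) := by
          rw [← ENNReal.ofReal_mul hA0, ← ENNReal.ofReal_mul hA0]
          congr 1
          ring
  calc _ ≤ _ := (Real.le_norm_self _).trans (norm_integral_le_lintegral_norm _)
    _ ≤ A * A / H * T ^ H := ENNReal.toReal_le_of_le_ofReal (by positivity) hle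
    _ ≤ (A * A / H + 1) * T ^ H := by linarith
end
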